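/- arXiv:1003.2338 — 3 statements merged into one kernel-verified Lean document; each statement's English description precedes it below -/
import Mathlib

section
/- Let (A,B) be a concave monotone pair in Mₙ(ℂ) (B ≥ 0, A = h(B) with h nondecreasing concave nonnegative) and let Φ : Mₙ(ℂ) → M_d(ℂ) be a unital positive linear map. Then there exists a unitary V ∈ M_d(ℂ) with |Φ(A)Φ(B)| ≤ (Φ(AB) + V Φ(AB) V*)/2. -/
open scoped Matrix ComplexOrder

/-- `A^p` for a matrix, via continuous functional calculus with the real power function. -/
noncomputable def mpow {n : ℕ} (A : Matrix (Fin n) (Fin n) ℂ) (p : ℝ) : Matrix (Fin n) (Fin n) ℂ :=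
  cfc (fun x : ℝ => x ^ p) A

/-- Matrix absolute value `|X| = (XᴴX)^{1/2}`. -/
noncomputable def matAbs {n : ℕ} (X : Matrix (Fin n) (Fin n) ℂ) : Matrix (Fin n) (Fin n) ℂ :=
  cfc Real.sqrt (Xᴴ * X)

/-- Loewner order: `X ≤ Y` iff `Y - X` is positive semidefinite. -/
def loewnerLE {n : ℕ} (X Y : Matrix (Fin n) (Fin n) ℂ) : Prop := (Y - X).PosSemidef

/-- `(A, B)` is a concave monotone pair: `B ≥ 0` and `A = h(B)` for a nonnegative
nondecreasing concave function `h` on `[0, ∞)`. -/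
def ConcaveMonotonePair {n : ℕ} (A B : Matrix (Fin n) (Fin n) ℂ) : Prop :=
  ∃ h : ℝ → ℝ, B.PosSemidef ∧ MonotoneOn h (Set.Ici 0) ∧ ConcaveOn ℝ (Set.Ici 0) h ∧
    (∀ x ∈ Set.Ici (0 : ℝ), 0 ≤ h x) ∧ A = cfc h B

/-!
Diagonalise `B = ∑ λᵢ Pᵢ` and put `Eᵢ = Φ(Pᵢ)`, a positive operator-valued measure. If `h` vanishes
at a nonzero eigenvalue of `B`, then `h(B) = 0`. Otherwise let `aᵢ = h(λᵢ)` and `cᵢ = λᵢ / h(λᵢ)`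
(with `0 / 0 = 0`), both nondecreasing in `λᵢ`, and write `S = ∑ aᵢ Eᵢ = Φ(A)`,
`T = ∑ cᵢ aᵢ Eᵢ = Φ(B)`, `R = ∑ cᵢ aᵢ² Eᵢ = Φ(AB)` and `K = ∑ cᵢ Eᵢ`.

Expanding `0 ≤ ∑ cᵢ (x - aᵢ)* Eᵢ (x - aᵢ)` at `x = S W`, where `S T = W |S T|` is a polar
decomposition, gives `2 |S T| ≤ W* (S K S) W + R`, so it suffices to find a unitary `U` with
`S K S ≤ U R U*`, i.e. to compare the ordered eigenvalues of `S K S` and `R`. For `μ > 0`,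
comonotonicity of `a²` and `c` yields `s t = μ` with `(aᵢ² - s) (cᵢ - t) ≥ 0` for all `i`; summing
against `E` and using Kadison's inequality `∑ aᵢ² Eᵢ ≥ S²` gives `R - μ ≥ s K + t S² - 2 μ`, and
conjugating by `S` gives `S (R - μ) S ≥ s (S K S - μ) + t (S² - s)²`. Hence `S` maps a subspace on
which `S K S ≥ μ` injectively to one on which `R ≥ μ`, and the min-max principle applies.
-/

section Scalar

variable {h : ℝ → ℝ} {s : Set ℝ}

lemma monotoneOn_div_of_antitoneOn_div (hs : s ⊆ Set.Ici 0) (hmono : MonotoneOn h s)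
    (hnonneg : ∀ x ∈ s, 0 ≤ h x) (hanti : AntitoneOn (fun x ↦ h x / x) (s \ {0})) :
    MonotoneOn (fun x ↦ x / h x) s := by
  intro x hx y hy hxy
  rcases (Set.mem_Ici.1 (hs hx)).eq_or_lt with rfl | hx0
  · simpa using div_nonneg (hs hy) (hnonneg y hy)
  rcases (hnonneg x hx).eq_or_lt with hhx | hhx
  · simpa [← hhx] using div_nonneg (hs hy) (hnonneg y hy)
  have hy0 := hx0.trans_le hxy
  have := inv_anti₀ (div_pos (hhx.trans_le (hmono hx hy hxy)) hy0)
    (hanti ⟨hx, hx0.ne'⟩ ⟨hy, hy0.ne'⟩ hxy)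
  simpa only [inv_div] using this

lemma eqOn_zero_of_antitoneOn_div (hs : s ⊆ Set.Ici 0) (hmono : MonotoneOn h s)
    (hnonneg : ∀ x ∈ s, 0 ≤ h x) (hanti : AntitoneOn (fun x ↦ h x / x) (s \ {0}))
    {x : ℝ} (hx : x ∈ s) (hx0 : x ≠ 0) (hhx : h x = 0) : Set.EqOn h 0 s := by
  intro y hy
  refine le_antisymm ?_ (hnonneg y hy)
  rcases le_total y x with hyx | hxy
  · exact (hmono hy hx hyx).trans_eq hhx
  · have hy0 := ((hs hx).lt_of_ne' hx0).trans_le hxy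
    have := hanti ⟨hx, hx0⟩ ⟨hy, hy0.ne'⟩ hxy
    simpa [hhx, div_le_iff₀ hy0] using this

lemma antitoneOn_div_of_concaveOn (h0 : 0 ≤ h 0) (hconc : ConcaveOn ℝ (Set.Ici 0) h) :
    AntitoneOn (fun x ↦ h x / x) (Set.Ici 0 \ {0}) := by
  have decomp : (fun x ↦ h x / x) = fun x ↦ slope h 0 x + h 0 * x⁻¹ := by
    ext x
    rw [slope_def_field, sub_zero]
    ring
  rw [decomp]
  refine (hconc.slope_anti Set.self_mem_Ici).add fun x hx y _ hxy ↦ ?_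
  have hx0 : 0 < x := hx.1.lt_of_ne' hx.2
  exact mul_le_mul_of_nonneg_left (inv_anti₀ hx0 hxy) h0

lemma exists_pos_forall_mul_le {ι : Type*} [Finite ι] (γ : ι → ℝ) {μ : ℝ} (hμ : 0 < μ) :
    ∃ ε > 0, ∀ i, ε * γ i ≤ μ := by
  obtain ⟨M, hM⟩ := (Set.finite_range γ).bddAbove
  have hM' : 0 < max M 1 := lt_max_of_lt_right one_pos
  refine ⟨μ / max M 1, div_pos hμ hM', fun i ↦ ?_⟩
  rw [div_mul_eq_mul_div, div_le_iff₀ hM']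
  exact mul_le_mul_of_nonneg_left ((hM ⟨i, rfl⟩).trans (le_max_left _ _)) hμ.le

lemma exists_mul_eq_forall_mul_sub_nonneg_of_monovary {ι : Type*} [Finite ι] {p γ : ι → ℝ}
    (hγ : ∀ i, 0 ≤ γ i) (hpγ : Monovary p γ) {μ : ℝ} (hμ : 0 < μ) :
    ∃ s t : ℝ, 0 < s ∧ 0 < t ∧ s * t = μ ∧ ∀ i, 0 ≤ (p i - s) * (γ i - t) := by
  cases isEmpty_or_nonempty ι
  · exact ⟨μ, 1, hμ, one_pos, mul_one μ, isEmptyElim⟩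
  obtain ⟨ε, hε, hεγ⟩ := exists_pos_forall_mul_le γ hμ
  -- `l i` is the left endpoint of the interval between `p i` and `μ / γ i`, truncated below at `ε`.
  -- Comonotonicity makes these intervals intersect pairwise, so the largest `l j` lies in all.
  let l : ι → ℝ := fun i ↦ if p i * γ i ≤ μ then max ε (p i) else μ / γ i
  have γ_pos : ∀ {i}, ¬ p i * γ i ≤ μ → 0 < γ i := fun {i} hi ↦
    (hγ i).lt_of_ne fun h ↦ hi (by rw [← h, mul_zero]; exact hμ.le)
  have l_pos (i) : 0 < l i := by
    by_cases hi : p i * γ i ≤ μ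
    · simp only [l, if_pos hi]; exact lt_max_of_lt_left hε
    · simp only [l, if_neg hi]; exact div_pos hμ (γ_pos hi)
  have le_l (i) : p i ≤ l i ∨ μ ≤ l i * γ i := by
    by_cases hi : p i * γ i ≤ μ
    · simp only [l, if_pos hi]; exact .inl (le_max_right _ _)
    · simp only [l, if_neg hi]; exact .inr (div_mul_cancel₀ _ (γ_pos hi).ne').ge
  have l_le (i j) : l j * γ i ≤ μ ∨ l j ≤ p i := by
    by_cases hj : p j * γ j ≤ μ
    · simp only [l, if_pos hj]
      rcases le_total (p j) ε with h | h
      · exact .inl (by rw [max_eq_left h]; exact hεγ i)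
      rw [max_eq_right h]
      refine (le_or_gt (p j) (p i)).symm.imp_left fun hij ↦ ?_
      have hγij : γ i ≤ γ j := not_lt.1 fun hlt ↦ (hpγ hlt).not_gt hij
      exact (mul_le_mul_of_nonneg_left hγij (hε.le.trans h)).trans hj
    · simp only [l, if_neg hj, div_mul_eq_mul_div, div_le_iff₀ (γ_pos hj)]
      refine (le_or_gt (γ i) (γ j)).imp (mul_le_mul_of_nonneg_left · hμ.le) fun hij ↦ ?_
      exact (not_le.1 hj).le.trans (mul_le_mul_of_nonneg_right (hpγ hij) (hγ j))
  obtain ⟨j, hj⟩ := Finite.exists_max l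
  refine ⟨l j, μ / l j, l_pos j, div_pos hμ (l_pos j), mul_div_cancel₀ _ (l_pos j).ne', fun i ↦ ?_⟩
  have ge : p i ≤ l j ∨ μ / l j ≤ γ i := (le_l i).imp (·.trans (hj i)) fun h ↦
    (div_le_iff₀' (l_pos j)).2 (h.trans (mul_le_mul_of_nonneg_right (hj i) (hγ i)))
  have le : γ i ≤ μ / l j ∨ l j ≤ p i := (l_le i j).imp_left (le_div_iff₀' (l_pos j)).2
  rcases ge with h | h <;> rcases le with h' | h'
  · exact mul_nonneg_of_nonpos_of_nonpos (sub_nonpos.2 h) (sub_nonpos.2 h')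
  · rw [le_antisymm h h', sub_self, zero_mul]
  · rw [le_antisymm h' h, sub_self, mul_zero]
  · exact mul_nonneg (sub_nonneg.2 h') (sub_nonneg.2 h)

end Scalar

section POVM

variable {ι 𝓐 : Type*} [Fintype ι] [Ring 𝓐] [PartialOrder 𝓐]

/-- `E` is a finite positive operator-valued measure: a resolution of the identity into positive
elements. It replaces the spectral projections after a unital positive map has been applied. -/
structure IsPOVM (E : ι → 𝓐) : Prop where
  nonneg : ∀ i, 0 ≤ E i
  sum_eq_one : ∑ i, E i = 1

variable {E : ι → 𝓐}

lemma IsPOVM.map {𝓑 F : Type*} [Ring 𝓑] [PartialOrder 𝓑] [FunLike F 𝓐 𝓑] [AddMonoidHomClass F 𝓐 𝓑]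
    (hE : IsPOVM E) (Φ : F) (hΦ1 : Φ 1 = 1) (hΦ : ∀ x, 0 ≤ x → 0 ≤ Φ x) :
    IsPOVM fun i ↦ Φ (E i) :=
  ⟨fun i ↦ hΦ _ (hE.nonneg i), by rw [← map_sum, hE.sum_eq_one, hΦ1]⟩

variable [StarRing 𝓐] [StarOrderedRing 𝓐] [Algebra ℝ 𝓐] [StarModule ℝ 𝓐]

lemma sum_smul_nonneg (hE : ∀ i, 0 ≤ E i) {f : ι → ℝ} (hf : ∀ i, 0 ≤ f i) :
    0 ≤ ∑ i, f i • E i :=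
  Finset.sum_nonneg fun i _ ↦ smul_nonneg (hf i) (hE i)

lemma isSelfAdjoint_sum_smul (hE : ∀ i, 0 ≤ E i) (f : ι → ℝ) : IsSelfAdjoint (∑ i, f i • E i) :=
  isSelfAdjoint_sum _ fun i _ ↦ (IsSelfAdjoint.all (f i)).smul (.of_nonneg (hE i))

lemma star_mul_add_mul_le_conjugate_add (hE : ∀ i, 0 ≤ E i) (a : ι → ℝ)
    {c : ι → ℝ} (hc : ∀ i, 0 ≤ c i) (x : 𝓐) :
    star x * (∑ i, (c i * a i) • E i) + (∑ i, (c i * a i) • E i) * x ≤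
      star x * (∑ i, c i • E i) * x + ∑ i, (c i * a i ^ 2) • E i := by
  have expand (i) : c i • (star (x - a i • 1) * E i * (x - a i • 1)) =
      star x * (c i • E i) * x + (c i * a i ^ 2) • E i -
        (star x * ((c i * a i) • E i) + (c i * a i) • E i * x) := by
    simp only [star_sub, star_smul, star_one, star_trivial, sub_mul, mul_sub, smul_mul_assoc,
      mul_smul_comm, one_mul, mul_one]
    module
  have nonneg : 0 ≤ ∑ i, c i • (star (x - a i • 1) * E i * (x - a i • 1)) :=
    sum_smul_nonneg (fun i ↦ star_left_conjugate_nonneg (hE i) _) hc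
  simpa only [expand, Finset.sum_sub_distrib, Finset.sum_add_distrib, ← Finset.mul_sum,
    ← Finset.sum_mul, sub_nonneg] using nonneg

namespace IsPOVM

lemma sq_sum_smul_le (hE : IsPOVM E) (a : ι → ℝ) :
    (∑ i, a i • E i) ^ 2 ≤ ∑ i, a i ^ 2 • E i := by
  have h := star_mul_add_mul_le_conjugate_add hE.nonneg a (c := 1) (fun _ ↦ zero_le_one)
    (∑ i, a i • E i)
  simp only [Pi.one_apply, one_mul, one_smul, hE.sum_eq_one, mul_one,
    (isSelfAdjoint_sum_smul hE.nonneg a).star_eq, ← sq] at h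
  exact le_of_add_le_add_left h

lemma smul_conjugate_sub_le (hE : IsPOVM E) {a c : ι → ℝ} {s t : ℝ} (ht : 0 ≤ t)
    (hst : ∀ i, 0 ≤ (a i ^ 2 - s) * (c i - t)) :
    s • ((∑ i, a i • E i) * (∑ i, c i • E i) * (∑ i, a i • E i) - (s * t) • 1) ≤
      (∑ i, a i • E i) * (∑ i, (c i * a i ^ 2) • E i - (s * t) • 1) * (∑ i, a i • E i) := by
  set S := ∑ i, a i • E i
  set K := ∑ i, c i • E i
  set R := ∑ i, (c i * a i ^ 2) • E i
  have hS : IsSelfAdjoint S := isSelfAdjoint_sum_smul hE.nonneg a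
  have expand : ∑ i, ((a i ^ 2 - s) * (c i - t)) • E i =
      R - s • K - t • ∑ i, a i ^ 2 • E i + (s * t) • 1 := by
    simp only [R, K, ← hE.sum_eq_one, Finset.smul_sum, ← Finset.sum_sub_distrib,
      ← Finset.sum_add_distrib]
    exact Finset.sum_congr rfl fun i _ ↦ by module
  have lower : s • K + t • S ^ 2 - (s * t) • 1 ≤ R := by
    have h := add_nonneg (sum_smul_nonneg hE.nonneg hst)
      (smul_nonneg ht (sub_nonneg.2 (hE.sq_sum_smul_le a)))
    rw [expand] at h
    rw [← sub_nonneg]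
    convert h using 1
    module
  have conj := hS.conjugate_nonneg (sub_nonneg.2 lower)
  have square : 0 ≤ t • (S ^ 2 - s • 1) ^ 2 :=
    smul_nonneg ht (((hS.pow 2).sub ((IsSelfAdjoint.all s).smul (.one 𝓐))).sq_nonneg)
  rw [← sub_nonneg]
  convert add_nonneg conj square using 1
  simp only [sq, sub_mul, mul_sub, add_mul, mul_add, smul_mul_assoc, mul_smul_comm, smul_sub,
    one_mul, mul_one, mul_assoc]
  module

end IsPOVM

end POVM

section Isometry

variable {𝕜 E F : Type*} [RCLike 𝕜] [NormedAddCommGroup E] [InnerProductSpace 𝕜 E]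
  [FiniteDimensional 𝕜 E] [AddCommGroup F] [Module 𝕜 F]

lemma exists_linearIsometryEquiv_comp_eq {f g : F →ₗ[𝕜] E} (h : ∀ v, ‖f v‖ = ‖g v‖) :
    ∃ u : E ≃ₗᵢ[𝕜] E, ∀ v, u (f v) = g v := by
  have hker : f.ker ≤ g.ker := fun v hv ↦ by
    rw [LinearMap.mem_ker] at hv ⊢
    rw [← norm_eq_zero, ← h, hv, norm_zero]
  let L₀ : f.range →ₗ[𝕜] E := f.ker.liftQ g hker ∘ₗ f.quotKerEquivRange.symm
  have hL₀ (v : F) : L₀ ⟨f v, v, rfl⟩ = g v := by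
    simp only [L₀, LinearMap.comp_apply, LinearEquiv.coe_coe]
    rw [LinearMap.quotKerEquivRange_symm_apply_image f v ⟨v, rfl⟩]
    simp
  let L : f.range →ₗᵢ[𝕜] E := ⟨L₀, by rintro ⟨_, v, rfl⟩; rw [hL₀, ← h]; rfl⟩
  exact ⟨L.extend.toLinearIsometryEquiv rfl, fun v ↦ (L.extend_apply ⟨f v, v, rfl⟩).trans (hL₀ v)⟩

end Isometry

section Eigenvalues

open Module (finrank)

variable {𝕜 E : Type*} [RCLike 𝕜] [NormedAddCommGroup E] [InnerProductSpace 𝕜 E]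
  [FiniteDimensional 𝕜 E] {N : ℕ} {A B S : E →ₗ[𝕜] E}

lemma re_inner_apply_self_sub_eq_sum (hA : A.IsSymmetric) (hN : finrank 𝕜 E = N) (μ : ℝ) (v : E) :
    RCLike.re (inner 𝕜 v (A v)) - μ * ‖v‖ ^ 2 =
      ∑ i, (hA.eigenvalues hN i - μ) * ‖(hA.eigenvectorBasis hN).repr v i‖ ^ 2 := by
  set b := hA.eigenvectorBasis hN
  have h : inner 𝕜 v (A v) = ∑ i, ((hA.eigenvalues hN i * ‖b.repr v i‖ ^ 2 : ℝ) : 𝕜) := by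
    rw [← b.repr.inner_map_map, PiLp.inner_apply]
    refine Finset.sum_congr rfl fun i _ ↦ ?_
    rw [hA.eigenvectorBasis_apply_self_apply, ← smul_eq_mul, inner_smul_right,
      inner_self_eq_norm_sq_to_K]
    push_cast
    rfl
  rw [h, ← RCLike.ofReal_sum, RCLike.ofReal_re, ← b.repr.norm_map, EuclideanSpace.norm_sq_eq,
    Finset.mul_sum, ← Finset.sum_sub_distrib]
  simp only [sub_mul]

lemma exists_submodule_eigenvalues_le (hA : A.IsSymmetric) (hN : finrank 𝕜 E = N) (j : Fin N) :
    ∃ V : Submodule 𝕜 E, finrank 𝕜 V = j + 1 ∧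
      ∀ v ∈ V, hA.eigenvalues hN j * ‖v‖ ^ 2 ≤ RCLike.re (inner 𝕜 v (A v)) := by
  set b := hA.eigenvectorBasis hN
  refine ⟨.span 𝕜 (b '' Set.Iic j), ?_, fun v hv ↦ ?_⟩
  · rw [Set.image_eq_range]
    refine (finrank_span_eq_card
      (b.orthonormal.linearIndependent.comp _ Subtype.val_injective)).trans ?_
    exact (Fintype.card_of_subtype (Finset.Iic j) (by simp)).trans (Fin.card_Iic j)
  · rw [← sub_nonneg, re_inner_apply_self_sub_eq_sum hA hN]
    refine Finset.sum_nonneg fun i _ ↦ ?_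
    by_cases hi : i ≤ j
    · exact mul_nonneg (sub_nonneg.2 (hA.eigenvalues_antitone hN hi)) (sq_nonneg _)
    · have : b.repr v i = 0 := by
        rw [← b.coe_toBasis, b.toBasis.mem_span_image] at hv
        by_contra h
        exact hi (hv (by simpa using h))
      simp [b, this]

lemma le_eigenvalues_of_lt_finrank (hA : A.IsSymmetric) (hN : finrank 𝕜 E = N) {μ : ℝ} {j : Fin N}
    {V : Submodule 𝕜 E} (hV : j < finrank 𝕜 V)
    (h : ∀ v ∈ V, μ * ‖v‖ ^ 2 ≤ RCLike.re (inner 𝕜 v (A v))) :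
    μ ≤ hA.eigenvalues hN j := by
  set b := hA.eigenvectorBasis hN
  let coords : V →ₗ[𝕜] (Fin j → 𝕜) :=
    LinearMap.pi (fun i ↦ b.toBasis.coord (i.castLE j.is_lt.le)) ∘ₗ V.subtype
  obtain ⟨v, hv, hv0⟩ := (Submodule.ne_bot_iff _).1
    (LinearMap.ker_ne_bot_of_finrank_lt (f := coords) (by simpa using hV))
  have hcoords (i : Fin N) (hi : i < j) : b.repr v i = 0 := congrFun hv ⟨i, hi⟩
  have hle : RCLike.re (inner 𝕜 (v : E) (A v)) ≤ hA.eigenvalues hN j * ‖(v : E)‖ ^ 2 := by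
    rw [← sub_nonpos, re_inner_apply_self_sub_eq_sum hA hN]
    refine Finset.sum_nonpos fun i _ ↦ ?_
    rcases lt_or_ge i j with hi | hi
    · simp [b, hcoords i hi]
    · exact mul_nonpos_of_nonpos_of_nonneg
        (sub_nonpos.2 (hA.eigenvalues_antitone hN hi)) (sq_nonneg _)
  have hpos : 0 < ‖(v : E)‖ ^ 2 := pow_pos (norm_pos_iff.2 (by simpa using hv0)) 2
  exact le_of_mul_le_mul_right ((h v v.2).trans hle) hpos

lemma eigenvalues_le_eigenvalues_of_forall_exists
    (hA : A.IsSymmetric) (hB : B.IsPositive) (hN : finrank 𝕜 E = N)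
    (h : ∀ μ : ℝ, 0 < μ → ∃ s : ℝ, 0 < s ∧ ∀ v,
      s * (RCLike.re (inner 𝕜 v (A v)) - μ * ‖v‖ ^ 2) ≤
        RCLike.re (inner 𝕜 (S v) (B (S v))) - μ * ‖S v‖ ^ 2)
    (j : Fin N) :
    hA.eigenvalues hN j ≤ hB.isSymmetric.eigenvalues hN j := by
  set α := hA.eigenvalues hN j
  rcases le_or_gt α 0 with hα | hα
  · exact hα.trans (hB.nonneg_eigenvalues hN j)
  obtain ⟨V, hVdim, hV⟩ := exists_submodule_eigenvalues_le hA hN j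
  have hdisj : Disjoint V S.ker := by
    refine Submodule.disjoint_def.2 fun v hvV hvS ↦ ?_
    obtain ⟨s, hs, hsv⟩ := h _ (half_pos hα)
    have hle : s * (RCLike.re (inner 𝕜 v (A v)) - α / 2 * ‖v‖ ^ 2) ≤ 0 := by
      simpa [LinearMap.mem_ker.1 hvS] using hsv v
    have hupper := sub_nonpos.1 (nonpos_of_mul_nonpos_right hle hs)
    have hnorm : ‖v‖ ^ 2 ≤ 0 := by nlinarith [hV v hvV]
    simpa using hnorm.antisymm (sq_nonneg _)
  have hmap : finrank 𝕜 (V.map S) = j + 1 := by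
    rw [← hVdim, ← LinearMap.range_domRestrict]
    refine LinearMap.finrank_range_of_inj (LinearMap.ker_eq_bot.1 ?_)
    rwa [LinearMap.ker_domRestrict, ← Submodule.disjoint_iff_comap_eq_bot]
  refine le_eigenvalues_of_lt_finrank _ hN (V := V.map S) (by omega) ?_
  rintro _ ⟨v, hvV, rfl⟩
  obtain ⟨s, hs, hsv⟩ := h α hα
  exact sub_nonneg.1 ((mul_nonneg hs.le (sub_nonneg.2 (hV v hvV))).trans (hsv v))

end Eigenvalues

section Matrix

open scoped MatrixOrder
open Matrix (unitaryGroup)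
open Unitary (conjStarAlgAut)

variable {𝕜 n : Type*} [RCLike 𝕜] [Fintype n] [DecidableEq n]

lemma inner_toEuclideanLin_conjTranspose_mul_mul (X S : Matrix n n 𝕜) (v : EuclideanSpace 𝕜 n) :
    inner 𝕜 v ((Sᴴ * X * S).toEuclideanLin v) =
      inner 𝕜 (S.toEuclideanLin v) (X.toEuclideanLin (S.toEuclideanLin v)) := by
  rw [Matrix.toEuclideanLin, Matrix.toLpLin_mul_same, Matrix.toLpLin_mul_same,
    LinearMap.comp_apply, LinearMap.comp_apply, ← Matrix.toEuclideanLin,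
    Matrix.toEuclideanLin_conjTranspose_eq_adjoint, LinearMap.adjoint_inner_right]

lemma norm_sq_toEuclideanLin (X : Matrix n n 𝕜) (v : EuclideanSpace 𝕜 n) :
    ‖X.toEuclideanLin v‖ ^ 2 = RCLike.re (inner 𝕜 v ((Xᴴ * X).toEuclideanLin v)) := by
  rw [← mul_one Xᴴ, inner_toEuclideanLin_conjTranspose_mul_mul, Matrix.toEuclideanLin,
    Matrix.toLpLin_one, LinearMap.id_apply, inner_self_eq_norm_sq]

lemma re_inner_toEuclideanLin_smul (s : ℝ) (X : Matrix n n 𝕜) (v : EuclideanSpace 𝕜 n) :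
    RCLike.re (inner 𝕜 v ((s • X).toEuclideanLin v)) =
      s * RCLike.re (inner 𝕜 v (X.toEuclideanLin v)) := by
  rw [RCLike.real_smul_eq_coe_smul (K := 𝕜), map_smul, LinearMap.smul_apply, inner_smul_right,
    RCLike.re_ofReal_mul]

lemma re_inner_toEuclideanLin_sub_smul_one (X : Matrix n n 𝕜) (μ : ℝ) (v : EuclideanSpace 𝕜 n) :
    RCLike.re (inner 𝕜 v ((X - μ • 1).toEuclideanLin v)) =
      RCLike.re (inner 𝕜 v (X.toEuclideanLin v)) - μ * ‖v‖ ^ 2 := by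
  rw [map_sub, LinearMap.sub_apply, inner_sub_right, map_sub, re_inner_toEuclideanLin_smul,
    Matrix.toEuclideanLin, Matrix.toLpLin_one, LinearMap.id_apply, inner_self_eq_norm_sq]

lemma re_inner_toEuclideanLin_mono {X Y : Matrix n n 𝕜} (h : X ≤ Y) (v : EuclideanSpace 𝕜 n) :
    RCLike.re (inner 𝕜 v (X.toEuclideanLin v)) ≤ RCLike.re (inner 𝕜 v (Y.toEuclideanLin v)) := by
  have := (Matrix.isPositive_toEuclideanLin_iff.2 (Matrix.le_iff.1 h)).re_inner_nonneg_right v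
  rwa [map_sub, LinearMap.sub_apply, inner_sub_right, map_sub, sub_nonneg] at this

lemma eigenvalues_le_eigenvalues_of_smul_sub_le_conjugate {M R S : Matrix n n 𝕜}
    (hM : M.IsHermitian) (hR : R.PosSemidef)
    (h : ∀ μ : ℝ, 0 < μ → ∃ s : ℝ, 0 < s ∧ s • (M - μ • 1) ≤ Sᴴ * (R - μ • 1) * S) (i : n) :
    hM.eigenvalues i ≤ hR.isHermitian.eigenvalues i := by
  refine eigenvalues_le_eigenvalues_of_forall_exists (S := S.toEuclideanLin) _
    (Matrix.isPositive_toEuclideanLin_iff.2 hR) _ (fun μ hμ ↦ ?_) _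
  obtain ⟨s, hs, hle⟩ := h μ hμ
  refine ⟨s, hs, fun v ↦ ?_⟩
  simpa only [re_inner_toEuclideanLin_smul, inner_toEuclideanLin_conjTranspose_mul_mul,
    re_inner_toEuclideanLin_sub_smul_one] using re_inner_toEuclideanLin_mono hle v

lemma exists_unitary_mul_eq_of_conjTranspose_mul_self_eq {X Y : Matrix n n 𝕜}
    (h : Xᴴ * X = Yᴴ * Y) : ∃ W : unitaryGroup n 𝕜, W * X = Y := by
  have hnorm (v : EuclideanSpace 𝕜 n) : ‖X.toEuclideanLin v‖ = ‖Y.toEuclideanLin v‖ := by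
    rw [← sq_eq_sq₀ (norm_nonneg _) (norm_nonneg _), norm_sq_toEuclideanLin, h,
      norm_sq_toEuclideanLin]
  obtain ⟨u, hu⟩ := exists_linearIsometryEquiv_comp_eq hnorm
  let φ := Matrix.toEuclideanCLM (n := n) (𝕜 := 𝕜)
  let w := Unitary.linearIsometryEquiv.symm u
  refine ⟨⟨φ.symm w, Unitary.map_mem φ.symm w.2⟩, EquivLike.injective φ ?_⟩
  ext v : 1
  rw [map_mul, StarAlgEquiv.apply_symm_apply]
  exact hu v

lemma cfc_sqrt_conjTranspose_mul_self (X : Matrix n n 𝕜) : cfc Real.sqrt (Xᴴ * X) = CFC.abs X := by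
  rw [← Matrix.star_eq_conjTranspose, CFC.abs, CFC.sqrt_eq_real_sqrt _ (star_mul_self_nonneg X),
    cfcₙ_eq_cfc]

lemma exists_unitary_mul_abs_eq (X : Matrix n n 𝕜) : ∃ W : unitaryGroup n 𝕜, W * CFC.abs X = X :=
  exists_unitary_mul_eq_of_conjTranspose_mul_self_eq <| by
    rw [← Matrix.star_eq_conjTranspose, (CFC.abs_nonneg X).isSelfAdjoint.star_eq, CFC.abs_mul_abs,
      Matrix.star_eq_conjTranspose]

lemma exists_unitary_le_conjugate_of_eigenvalues_le {M R : Matrix n n 𝕜}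
    (hM : M.IsHermitian) (hR : R.IsHermitian) (h : ∀ i, hM.eigenvalues i ≤ hR.eigenvalues i) :
    ∃ U : unitaryGroup n 𝕜, M ≤ conjStarAlgAut 𝕜 _ U R := by
  refine ⟨hM.eigenvectorUnitary * star hR.eigenvectorUnitary, ?_⟩
  rw [Unitary.conjStarAlgAut_mul_apply, hR.conjStarAlgAut_star_eigenvectorUnitary]
  conv_lhs => rw [hM.spectral_theorem]
  refine OrderHomClass.mono _ (Matrix.le_iff.2 ?_)
  rw [Matrix.diagonal_sub, Matrix.posSemidef_diagonal_iff]
  exact fun i ↦ sub_nonneg.2 (RCLike.ofReal_le_ofReal.2 (h i))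

namespace IsPOVM

variable {ι : Type*} [Fintype ι] {E : ι → Matrix n n 𝕜}

lemma exists_unitary_conjugate_sum_smul_le (hE : IsPOVM E) {a c : ι → ℝ} (hc : ∀ i, 0 ≤ c i)
    (hac : Monovary (fun i ↦ a i ^ 2) c) :
    ∃ U : unitaryGroup n 𝕜, (∑ i, a i • E i) * (∑ i, c i • E i) * (∑ i, a i • E i) ≤
      conjStarAlgAut 𝕜 _ U (∑ i, (c i * a i ^ 2) • E i) := by
  have hS := isSelfAdjoint_sum_smul hE.nonneg a
  have hM := (hS.conjugate_nonneg (sum_smul_nonneg hE.nonneg hc)).isSelfAdjoint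
  have hR := Matrix.nonneg_iff_posSemidef.1
    (sum_smul_nonneg hE.nonneg fun i ↦ mul_nonneg (hc i) (sq_nonneg (a i)))
  refine exists_unitary_le_conjugate_of_eigenvalues_le hM hR.isHermitian
    (eigenvalues_le_eigenvalues_of_smul_sub_le_conjugate hM hR
      (S := ∑ i, a i • E i) fun μ hμ ↦ ?_)
  obtain ⟨s, t, hs, ht, rfl, hst⟩ := exists_mul_eq_forall_mul_sub_nonneg_of_monovary hc hac hμ
  refine ⟨s, hs, (hE.smul_conjugate_sub_le ht.le hst).trans_eq ?_⟩
  rw [← Matrix.star_eq_conjTranspose, hS.star_eq]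

lemma exists_unitary_abs_mul_le (hE : IsPOVM E) {a c : ι → ℝ} (hc : ∀ i, 0 ≤ c i)
    (hac : Monovary (fun i ↦ a i ^ 2) c) :
    ∃ V : unitaryGroup n 𝕜, CFC.abs ((∑ i, a i • E i) * ∑ i, (c i * a i) • E i) ≤
      (2 : ℝ)⁻¹ • (∑ i, (c i * a i ^ 2) • E i +
        conjStarAlgAut 𝕜 _ V (∑ i, (c i * a i ^ 2) • E i)) := by
  obtain ⟨U, hU⟩ := hE.exists_unitary_conjugate_sum_smul_le hc hac
  have key := star_mul_add_mul_le_conjugate_add hE.nonneg a hc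
  have hS := isSelfAdjoint_sum_smul hE.nonneg a
  have hT := isSelfAdjoint_sum_smul hE.nonneg fun i ↦ c i * a i
  set S := ∑ i, a i • E i
  set T := ∑ i, (c i * a i) • E i
  set R := ∑ i, (c i * a i ^ 2) • E i
  obtain ⟨W, hW⟩ := exists_unitary_mul_abs_eq (S * T)
  have left : star (S * (W : Matrix n n 𝕜)) * T = CFC.abs (S * T) := by
    rw [star_mul, hS.star_eq, mul_assoc]
    nth_rw 1 [← hW]
    rw [← mul_assoc, Unitary.coe_star_mul_self, one_mul]
  have right : T * (S * W) = CFC.abs (S * T) := by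
    rw [← (CFC.abs_nonneg (S * T)).isSelfAdjoint.star_eq, ← left, star_mul, star_star, hT.star_eq]
  refine ⟨star W * U, ?_⟩
  rw [le_inv_smul_iff_of_pos two_pos, two_smul]
  calc CFC.abs (S * T) + CFC.abs (S * T)
      ≤ star (S * (W : Matrix n n 𝕜)) * (∑ i, c i • E i) * (S * W) + R := by
        simpa only [left, right] using key (S * W)
    _ = conjStarAlgAut 𝕜 _ (star W) (S * (∑ i, c i • E i) * S) + R := by
        simp only [star_mul, hS.star_eq, Unitary.conjStarAlgAut_apply, Unitary.coe_star,
          star_star, mul_assoc]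
    _ ≤ conjStarAlgAut 𝕜 _ (star W) (conjStarAlgAut 𝕜 _ U R) + R := by
        gcongr
    _ = R + conjStarAlgAut 𝕜 _ (star W * U) R := by
        rw [Unitary.conjStarAlgAut_mul_apply, add_comm]

end IsPOVM

variable {B : Matrix n n 𝕜} {h : ℝ → ℝ}

lemma exists_isPOVM_cfc_eq_sum (hB : B.IsHermitian) :
    ∃ P : n → Matrix n n 𝕜, IsPOVM P ∧ ∀ f : ℝ → ℝ, cfc f B = ∑ i, f (hB.eigenvalues i) • P i := by
  let u := conjStarAlgAut 𝕜 _ hB.eigenvectorUnitary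
  let P (i : n) : Matrix n n 𝕜 := u (Matrix.diagonal (Pi.single i 1))
  have cfc_eq (f : ℝ → ℝ) : cfc f B = ∑ i, f (hB.eigenvalues i) • P i := by
    have diagonal_eq (g : n → 𝕜) :
        Matrix.diagonal g = ∑ i, g i • Matrix.diagonal (Pi.single i (1 : 𝕜)) := by
      ext i j
      simp [Matrix.sum_apply, Matrix.diagonal_apply, Pi.single_apply]
    rw [hB.cfc_eq, Matrix.IsHermitian.cfc, diagonal_eq, map_sum]
    refine Finset.sum_congr rfl fun i _ ↦ ?_
    rw [map_smul, RCLike.real_smul_eq_coe_smul (K := 𝕜)]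
    rfl
  refine ⟨P, ⟨fun i ↦ map_nonneg u (Matrix.nonneg_iff_posSemidef.2 ?_), ?_⟩, cfc_eq⟩
  · exact Matrix.posSemidef_diagonal_iff.2 (Pi.single_nonneg.2 zero_le_one)
  · simpa only [one_smul] using (cfc_eq fun _ ↦ 1).symm.trans (cfc_const_one ℝ B)

lemma exists_isPOVM_map_cfc_eq_sum {𝓐 : Type*} [Ring 𝓐] [PartialOrder 𝓐] [Algebra ℝ 𝓐]
    (hB : B.IsHermitian) (Φ : Matrix n n 𝕜 →ₗ[ℝ] 𝓐) (hΦ1 : Φ 1 = 1) (hΦ : ∀ X, 0 ≤ X → 0 ≤ Φ X) :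
    ∃ E : n → 𝓐, IsPOVM E ∧ ∀ f : ℝ → ℝ, Φ (cfc f B) = ∑ i, f (hB.eigenvalues i) • E i := by
  obtain ⟨P, hP, cfc_eq⟩ := exists_isPOVM_cfc_eq_sum hB
  exact ⟨_, hP.map Φ hΦ1 hΦ, fun f ↦ by simp only [cfc_eq, map_sum, map_smul]⟩

lemma spectrum_real_subset_Ici (hB : B.PosSemidef) : spectrum ℝ B ⊆ Set.Ici 0 :=
  fun _ hx ↦ spectrum_nonneg_of_nonneg (Matrix.nonneg_iff_posSemidef.2 hB) hx

lemma cfc_div_mul_eq_self (hB : B.IsHermitian)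
    (hh : ∀ x ∈ spectrum ℝ B, h x = 0 → x = 0) :
    cfc (fun x ↦ x / h x * h x) B = B :=
  (cfc_congr fun x hx ↦ div_mul_cancel_of_imp (hh x hx)).trans (cfc_id' ℝ B hB.isSelfAdjoint)

lemma cfc_div_mul_sq_eq_mul (hB : B.IsHermitian)
    (hh : ∀ x ∈ spectrum ℝ B, h x = 0 → x = 0) :
    cfc (fun x ↦ x / h x * h x ^ 2) B = cfc h B * B := by
  have hcont (f : ℝ → ℝ) : ContinuousOn f (spectrum ℝ B) := B.finite_real_spectrum.continuousOn f
  calc cfc (fun x ↦ x / h x * h x ^ 2) B = cfc (fun x ↦ h x * (x / h x * h x)) B :=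
        cfc_congr fun x _ ↦ by ring
    _ = cfc h B * B := by rw [cfc_mul h _ B (hcont _) (hcont _), cfc_div_mul_eq_self hB hh]

theorem concave_pair_abs_inequality_general {𝕜' d : Type*} [RCLike 𝕜'] [Fintype d] [DecidableEq d]
    (hB : B.PosSemidef) (hmono : MonotoneOn h (spectrum ℝ B))
    (hnonneg : ∀ x ∈ spectrum ℝ B, 0 ≤ h x)
    (hanti : AntitoneOn (fun x ↦ h x / x) (spectrum ℝ B \ {0}))
    (Φ : Matrix n n 𝕜 →ₗ[ℝ] Matrix d d 𝕜') (hΦ1 : Φ 1 = 1) (hΦ : ∀ X, 0 ≤ X → 0 ≤ Φ X) :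
    ∃ V : unitaryGroup d 𝕜', CFC.abs (Φ (cfc h B) * Φ B) ≤
      (2 : ℝ)⁻¹ • (Φ (cfc h B * B) + conjStarAlgAut 𝕜' _ V (Φ (cfc h B * B))) := by
  have hspec := spectrum_real_subset_Ici hB
  by_cases hzero : ∃ x ∈ spectrum ℝ B, x ≠ 0 ∧ h x = 0
  · obtain ⟨x, hx, hx0, hhx⟩ := hzero
    have hcfc : cfc h B = 0 :=
      (cfc_congr (eqOn_zero_of_antitoneOn_div hspec hmono hnonneg hanti hx hx0 hhx)).trans
        (cfc_zero ℝ B)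
    exact ⟨1, by simp [hcfc]⟩
  have hzero' (x) (hx : x ∈ spectrum ℝ B) (hhx : h x = 0) : x = 0 :=
    by_contra fun hx0 ↦ hzero ⟨x, hx, hx0, hhx⟩
  obtain ⟨E, hE, map_cfc⟩ := exists_isPOVM_map_cfc_eq_sum hB.isHermitian Φ hΦ1 hΦ
  have hk := hB.isHermitian.eigenvalues_mem_spectrum_real
  have hdiv := monotoneOn_div_of_antitoneOn_div hspec hmono hnonneg hanti
  have hsq : MonotoneOn (fun x ↦ h x ^ 2) (spectrum ℝ B) := fun x hx y hy hxy ↦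
    pow_le_pow_left₀ (hnonneg x hx) (hmono hx hy hxy) 2
  have habs := hE.exists_unitary_abs_mul_le
    (fun i ↦ div_nonneg (hspec (hk i)) (hnonneg _ (hk i)))
    fun i j ↦ hsq.monovaryOn hdiv (hk i) (hk j)
  simpa only [← map_cfc fun x ↦ x / h x * h x, ← map_cfc fun x ↦ x / h x * h x ^ 2, ← map_cfc h,
    cfc_div_mul_eq_self hB.isHermitian hzero', cfc_div_mul_sq_eq_mul hB.isHermitian hzero']
    using habs

end Matrix

/-- For a concave monotone pair `(A, B)` and a unital positive linear map `Φ`, there is a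
unitary `V` with `|Φ(A) Φ(B)| ≤ (Φ(AB) + V Φ(AB) V*)/2`. -/
theorem concave_pair_abs_inequality {n d : ℕ} (A B : Matrix (Fin n) (Fin n) ℂ)
    (hAB : ConcaveMonotonePair A B)
    (Φ : Matrix (Fin n) (Fin n) ℂ →ₗ[ℂ] Matrix (Fin d) (Fin d) ℂ)
    (hΦ1 : Φ 1 = 1) (hΦpos : ∀ X : Matrix (Fin n) (Fin n) ℂ, X.PosSemidef → (Φ X).PosSemidef) :
    ∃ V : Matrix (Fin d) (Fin d) ℂ, V ∈ Matrix.unitaryGroup (Fin d) ℂ ∧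
      loewnerLE (matAbs (Φ A * Φ B)) ((2 : ℂ)⁻¹ • (Φ (A * B) + V * Φ (A * B) * Vᴴ)) := by
  obtain ⟨h, hB, hmono, hconc, hnonneg, rfl⟩ := hAB
  have hspec := spectrum_real_subset_Ici hB
  obtain ⟨V, hV⟩ := concave_pair_abs_inequality_general hB (hmono.mono hspec)
    (fun x hx ↦ hnonneg x (hspec hx))
    ((antitoneOn_div_of_concaveOn (hnonneg 0 Set.self_mem_Ici) hconc).mono
      (Set.sdiff_subset_sdiff_left hspec))
    (Φ.restrictScalars ℝ) hΦ1 fun X ↦ by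
      rw [Matrix.nonneg_iff_posSemidef, Matrix.nonneg_iff_posSemidef]
      exact hΦpos X
  refine ⟨V, V.2, ?_⟩
  rw [matAbs, cfc_sqrt_conjTranspose_mul_self]
  rw [Matrix.le_iff, RCLike.real_smul_eq_coe_smul (K := ℂ)] at hV
  rw [Unitary.conjStarAlgAut_apply, RCLike.ofReal_inv, RCLike.ofReal_ofNat] at hV
  exact hV
end

section
/- Let (A,B) be a concave monotone pair in Mₙ(ℂ) and Φ : Mₙ(ℂ) → M_d(ℂ) a unital positive linear map. Then |Φ(A)Φ(B)| is weakly log-majorized by Φ(AB): for every k, the product of the k largest eigenvalues of |Φ(A)Φ(B)| is at most the product of the k largest eigenvalues of Φ(AB). -/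
open scoped Matrix ComplexOrder

/-- The eigenvalues of a Hermitian matrix, arranged in decreasing order (junk value otherwise). -/
noncomputable def eigDesc {m : ℕ} (X : Matrix (Fin m) (Fin m) ℂ) : Fin m → ℝ :=
  if hX : X.IsHermitian then fun j => (hX.eigenvalues ∘ Tuple.sort hX.eigenvalues) j.rev else 0

/-! For `z > 0`, choose `y > 0` with `x y = z`, where `x = h y`. Monotonicity of `h` and of
`t ↦ t / h t` give `y h(b)² + 2 x² b ≤ 2 x b h(b) + x² y` for all `b ≥ 0`, hence the same inequality
for the commuting pair `(A, B)`. Applying `Φ` and Kadison's inequality `Φ(A)² ≤ Φ(A²)`, then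
conjugating by `Y = Φ(B)` and using `3 y Y² ≤ 2 Y³ + y³`, one gets, with `X = Φ(A)` and
`Z = Φ(A B)`,
`y Y X² Y ≤ 2 x Y (Z - z) Y + y z²`.
If `z ≥ λⱼ(Z)`, then by Courant-Fischer `Z ≤ z` on the kernel of `j` linear functionals (counting
from `j = 0`). On the preimage of that kernel under `Y` the inequality says `‖X Y w‖ ≤ z ‖w‖`, so
Courant-Fischer again gives `λⱼ(|X Y|) ≤ z`: the comparison holds eigenvalue by eigenvalue. -/

section ConcaveFunctions

open Set

variable {h : ℝ → ℝ}

lemma mul_apply_le_mul_apply_of_concaveOn (hc : ConcaveOn ℝ (Ici 0) h) (h0 : 0 ≤ h 0)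
    {p q : ℝ} (hp : 0 ≤ p) (hpq : p ≤ q) : p * h q ≤ q * h p := by
  rcases hpq.eq_or_lt with rfl | hlt
  · rfl
  have hq : 0 < q := hp.trans_lt hlt
  have hpq' : 0 ≤ 1 - p / q := sub_nonneg.2 (div_le_one_of_le₀ hpq hq.le)
  have hconc : (1 - p / q) * h 0 + p / q * h q ≤ h ((1 - p / q) * 0 + p / q * q) :=
    hc.2 self_mem_Ici hq.le hpq' (by positivity) (by ring)
  rw [mul_zero, zero_add, div_mul_cancel₀ p hq.ne'] at hconc
  have hle : p / q * h q ≤ h p := by linarith [mul_nonneg hpq' h0]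
  calc p * h q = q * (p / q * h q) := by field_simp
    _ ≤ q * h p := by gcongr

lemma mul_sq_add_sq_mul_le_of_concaveOn (hm : MonotoneOn h (Ici 0))
    (hc : ConcaveOn ℝ (Ici 0) h) (h0 : 0 ≤ h 0) {y b : ℝ} (hy : 0 ≤ y) (hb : 0 ≤ b) :
    y * h b ^ 2 + 2 * h y ^ 2 * b ≤ 2 * h y * (h b * b) + h y ^ 2 * y := by
  have hcross : 0 ≤ (h y * b - y * h b) * (h b - h y) := by
    rcases le_total y b with hyb | hby
    · exact mul_nonneg (by linarith [mul_apply_le_mul_apply_of_concaveOn hc h0 hy hyb])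
        (sub_nonneg.2 (hm hy hb hyb))
    · exact mul_nonneg_of_nonpos_of_nonpos
        (by linarith [mul_apply_le_mul_apply_of_concaveOn hc h0 hb hby])
        (sub_nonpos.2 (hm hb hy hby))
  -- The difference of the two sides is `y (h b - h y)² + 2 (h y b - y h b) (h b - h y)`.
  linarith [mul_nonneg hy (sq_nonneg (h b - h y))]

lemma exists_pos_apply_mul_self_eq (hm : MonotoneOn h (Ici 0)) (hc : ConcaveOn ℝ (Ici 0) h)
    {t z : ℝ} (ht : 0 < t) (hht : 0 < h t) (hz : 0 < z) : ∃ y, 0 < y ∧ h y * y = z := by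
  set s := z / h t
  have hs : 0 < s := by positivity
  have hts : h t * s = z := mul_div_cancel₀ z hht.ne'
  have hmin : 0 < min t s := lt_min ht hs
  have hcont : ContinuousOn (fun y => h y * y) (Icc (min t s) (max t s)) := by
    refine (hc.continuousOn_interior.mono fun u hu => ?_).mul continuousOn_id
    rw [interior_Ici]
    exact hmin.trans_le hu.1
  have hlow : h (min t s) * min t s ≤ z := calc
    h (min t s) * min t s ≤ h t * s :=
      mul_le_mul (hm hmin.le ht.le (min_le_left t s)) (min_le_right t s) hmin.le hht.le
    _ = z := hts
  have hhigh : z ≤ h (max t s) * max t s := by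
    have hmax : h t ≤ h (max t s) := hm ht.le (ht.le.trans (le_max_left t s)) (le_max_left t s)
    calc z = h t * s := hts.symm
      _ ≤ h (max t s) * max t s := mul_le_mul hmax (le_max_right t s) hs.le (hht.le.trans hmax)
  obtain ⟨y, hy, hyz⟩ := intermediate_value_Icc min_le_max hcont ⟨hlow, hhigh⟩
  exact ⟨y, hmin.trans_le hy.1, hyz⟩

-- The alternative `x = 0` serves the functions `h` that vanish on `[0, ∞)`.
lemma exists_mul_sq_add_sq_mul_le_of_concaveOn (hm : MonotoneOn h (Ici 0))
    (hc : ConcaveOn ℝ (Ici 0) h) (h0 : 0 ≤ h 0) {z : ℝ} (hz : 0 < z) :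
    ∃ x y, 0 ≤ x ∧ 0 < y ∧ (x = 0 ∨ x * y = z) ∧
      ∀ b, 0 ≤ b → y * h b ^ 2 + 2 * x ^ 2 * b ≤ 2 * x * (h b * b) + x ^ 2 * y := by
  have hnn {b : ℝ} (hb : 0 ≤ b) : 0 ≤ h b := h0.trans (hm self_mem_Ici hb hb)
  by_cases hpos : ∃ t, 0 < t ∧ 0 < h t
  · obtain ⟨t, ht, hht⟩ := hpos
    obtain ⟨y, hy, hyz⟩ := exists_pos_apply_mul_self_eq hm hc ht hht hz
    exact ⟨h y, y, hnn hy.le, hy, .inr hyz,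
      fun b hb => mul_sq_add_sq_mul_le_of_concaveOn hm hc h0 hy.le hb⟩
  · push Not at hpos
    refine ⟨0, 1, le_rfl, one_pos, .inl rfl, fun b hb => ?_⟩
    have hb1 : 0 < b + 1 := by positivity
    have hb0 : h b = 0 :=
      ((hm hb hb1.le (by linarith)).trans (hpos (b + 1) hb1)).antisymm (hnn hb)
    simp [hb0]

end ConcaveFunctions

section StarOrderedAlgebra

variable {R : Type*} [Ring R] [StarRing R] [PartialOrder R] [StarOrderedRing R] [Algebra ℝ R]
  [StarModule ℝ R]

lemma sq_sum_smul_le {ι : Type*} {s : Finset ι} {M : ι → R} (hM : ∀ i ∈ s, 0 ≤ M i)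
    (hsum : ∑ i ∈ s, M i ≤ 1) (c : ι → ℝ) :
    (∑ i ∈ s, c i • M i) ^ 2 ≤ ∑ i ∈ s, c i ^ 2 • M i := by
  set X := ∑ i ∈ s, c i • M i with hX
  have hXsa : IsSelfAdjoint X :=
    isSelfAdjoint_sum s fun i hi => (IsSelfAdjoint.all (c i)).smul (.of_nonneg (hM i hi))
  have hterm (i : ι) : (c i • 1 - X) * M i * (c i • 1 - X) =
      c i ^ 2 • M i - X * (c i • M i) - c i • M i * X + X * M i * X := by
    simp only [sub_mul, mul_sub, smul_mul_assoc, mul_smul_comm, one_mul, mul_one]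
    module
  have hvar : ∑ i ∈ s, (c i • 1 - X) * M i * (c i • 1 - X) =
      ∑ i ∈ s, c i ^ 2 • M i - X * X - X * X + X * (∑ i ∈ s, M i) * X := by
    simp only [hterm, Finset.sum_add_distrib, Finset.sum_sub_distrib, ← Finset.mul_sum,
      ← Finset.sum_mul, ← hX]
  have hvar_nonneg : 0 ≤ ∑ i ∈ s, (c i • 1 - X) * M i * (c i • 1 - X) :=
    Finset.sum_nonneg fun i hi =>
      (((IsSelfAdjoint.all (c i)).smul (.one R)).sub hXsa).conjugate_nonneg (hM i hi)
  have hsub : 0 ≤ X * X - X * (∑ i ∈ s, M i) * X := by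
    simpa only [mul_one, sub_nonneg] using hXsa.conjugate_le_conjugate hsum
  rw [← sub_nonneg]
  convert add_nonneg hvar_nonneg hsub using 1
  rw [hvar, sq]
  abel

lemma three_mul_smul_sq_le [IsOrderedModule ℝ R] {Y : R} (hY : 0 ≤ Y) {y : ℝ} (hy : 0 ≤ y) :
    (3 * y) • Y ^ 2 ≤ (2 : ℝ) • Y ^ 3 + y ^ 3 • (1 : R) := by
  have hsa : IsSelfAdjoint (Y - y • 1) :=
    (IsSelfAdjoint.of_nonneg hY).sub ((IsSelfAdjoint.all y).smul (.one R))
  have hnn : 0 ≤ (2 : ℝ) • Y + y • 1 :=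
    add_nonneg (smul_nonneg zero_le_two hY) (smul_nonneg hy zero_le_one)
  have hfactor : (2 : ℝ) • Y ^ 3 + y ^ 3 • (1 : R) - (3 * y) • Y ^ 2 =
      (Y - y • 1) * ((2 : ℝ) • Y + y • 1) * (Y - y • 1) := by
    simp only [pow_succ, pow_zero, one_mul, sub_mul, mul_sub, mul_add, add_mul, smul_mul_assoc,
      mul_smul_comm, mul_one]
    module
  rw [← sub_nonneg, hfactor]
  exact hsa.conjugate_nonneg hnn

lemma smul_conjugate_sq_add_le [IsOrderedModule ℝ R] {X Y Z : R} (hY : 0 ≤ Y) {x y : ℝ}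
    (hy : 0 ≤ y) (hle : y • X ^ 2 + (2 * x ^ 2) • Y ≤ (2 * x) • Z + (x ^ 2 * y) • 1) :
    y • (Y * X ^ 2 * Y) + (2 * x ^ 2 * y) • Y ^ 2 ≤
      (2 * x) • (Y * Z * Y) + (x ^ 2 * y ^ 3) • (1 : R) := by
  have hconj := (IsSelfAdjoint.of_nonneg hY).conjugate_le_conjugate hle
  have hcubic := smul_le_smul_of_nonneg_left (three_mul_smul_sq_le hY hy) (sq_nonneg x)
  rw [← sub_nonneg] at hconj hcubic ⊢
  convert add_nonneg hconj hcubic using 1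
  simp only [pow_succ, pow_zero, one_mul, mul_add, add_mul, smul_mul_assoc, mul_smul_comm,
    mul_one]
  module

end StarOrderedAlgebra

section FunctionalCalculus

variable {𝓐 : Type*} [Ring 𝓐] [StarRing 𝓐] [TopologicalSpace 𝓐] [Algebra ℝ 𝓐]
  [ContinuousFunctionalCalculus ℝ 𝓐 IsSelfAdjoint]

lemma cfc_eq_sum_of_finite_spectrum {a : 𝓐} (hfin : (spectrum ℝ a).Finite)
    (f : ℝ → ℝ) : cfc f a = ∑ μ ∈ hfin.toFinset, f μ • cfc (Pi.single μ (1 : ℝ)) a := by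
  have hcont (g : ℝ → ℝ) : ContinuousOn g (spectrum ℝ a) := hfin.continuousOn g
  simp_rw [← cfc_smul _ _ a (hcont _)]
  rw [← cfc_sum _ a _ fun _ _ => hcont _]
  refine cfc_congr fun x hx => ?_
  simp [Finset.sum_apply, Pi.single_apply, hfin.mem_toFinset.2 hx]

variable [PartialOrder 𝓐] [StarOrderedRing 𝓐]

section Kadison

variable {R : Type*} [Ring R] [StarRing R] [PartialOrder R] [StarOrderedRing R] [Algebra ℝ R]
  [StarModule ℝ R]

theorem sq_map_le_map_sq_of_finite_spectrum (Φ : 𝓐 →ₚ[ℝ] R) (hΦ : Φ 1 ≤ 1)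
    {a : 𝓐} (ha : IsSelfAdjoint a) (hfin : (spectrum ℝ a).Finite) : Φ a ^ 2 ≤ Φ (a ^ 2) := by
  let M (μ : ℝ) : R := Φ (cfc (Pi.single μ (1 : ℝ)) a)
  have hM (μ : ℝ) : 0 ≤ M μ :=
    map_nonneg Φ (cfc_nonneg fun x _ => (Pi.single_nonneg.2 zero_le_one : (0 : ℝ → ℝ) ≤ _) x)
  have hmap (f : ℝ → ℝ) : Φ (cfc f a) = ∑ μ ∈ hfin.toFinset, f μ • M μ := by
    rw [cfc_eq_sum_of_finite_spectrum hfin f, map_sum]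
    simp only [map_smul, M]
  have hsum : ∑ μ ∈ hfin.toFinset, M μ ≤ 1 := by
    have hone : Φ 1 = ∑ μ ∈ hfin.toFinset, M μ := by
      simpa only [one_smul, cfc_const_one ℝ a] using hmap fun _ => 1
    rwa [← hone]
  calc Φ a ^ 2 = (∑ μ ∈ hfin.toFinset, μ • M μ) ^ 2 := by rw [← hmap fun x => x, cfc_id' ℝ a]
    _ ≤ ∑ μ ∈ hfin.toFinset, μ ^ 2 • M μ := sq_sum_smul_le (fun μ _ => hM μ) hsum _
    _ = Φ (a ^ 2) := by rw [← hmap (· ^ 2), cfc_pow_id a 2]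

end Kadison

variable [NonnegSpectrumClass ℝ 𝓐] {B : 𝓐} {h : ℝ → ℝ} {x y : ℝ}

lemma cfc_mul_self_nonneg (hB : 0 ≤ B) (hh : ContinuousOn h (spectrum ℝ B))
    (h0 : ∀ b, 0 ≤ b → 0 ≤ h b) : 0 ≤ cfc h B * B := by
  have hBsa : IsSelfAdjoint B := .of_nonneg hB
  have hcfc : cfc (fun b => h b * b) B = cfc h B * B := by rw [cfc_mul .., cfc_id' ..]
  rw [← hcfc]
  exact cfc_nonneg fun b hb =>
    have hb0 := spectrum_nonneg_of_nonneg hB hb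
    mul_nonneg (h0 b hb0) hb0

lemma smul_cfc_sq_add_smul_le (hB : 0 ≤ B) (hh : ContinuousOn h (spectrum ℝ B))
    (hxy : ∀ b, 0 ≤ b → y * h b ^ 2 + 2 * x ^ 2 * b ≤ 2 * x * (h b * b) + x ^ 2 * y) :
    y • cfc h B ^ 2 + (2 * x ^ 2) • B ≤ (2 * x) • (cfc h B * B) + (x ^ 2 * y) • 1 := by
  have hBsa : IsSelfAdjoint B := .of_nonneg hB
  calc y • cfc h B ^ 2 + (2 * x ^ 2) • B = cfc (fun b => y * h b ^ 2 + 2 * x ^ 2 * b) B := by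
        rw [cfc_add .., cfc_const_mul .., cfc_pow .., cfc_const_mul_id ..]
    _ ≤ cfc (fun b => 2 * x * (h b * b) + x ^ 2 * y) B :=
        cfc_mono fun b hb => hxy b (spectrum_nonneg_of_nonneg hB hb)
    _ = (2 * x) • (cfc h B * B) + (x ^ 2 * y) • 1 := by
        rw [cfc_add .., cfc_const_mul .., cfc_mul .., cfc_id' .., cfc_const ..,
          Algebra.algebraMap_eq_smul_one]

lemma smul_sq_map_cfc_add_smul_map_le {R : Type*} [Ring R] [StarRing R] [PartialOrder R]
    [StarOrderedRing R] [Algebra ℝ R] [StarModule ℝ R] [IsOrderedModule ℝ R]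
    (Φ : 𝓐 →ₚ[ℝ] R) (hΦ : Φ 1 ≤ 1) (hB : 0 ≤ B) (hfin : (spectrum ℝ B).Finite) (hy : 0 ≤ y)
    (hxy : ∀ b, 0 ≤ b → y * h b ^ 2 + 2 * x ^ 2 * b ≤ 2 * x * (h b * b) + x ^ 2 * y) :
    y • Φ (cfc h B) ^ 2 + (2 * x ^ 2) • Φ B ≤
      (2 * x) • Φ (cfc h B * B) + (x ^ 2 * y) • 1 := by
  have hh : ContinuousOn h (spectrum ℝ B) := hfin.continuousOn h
  have hBsa : IsSelfAdjoint B := .of_nonneg hB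
  have hAfin : (spectrum ℝ (cfc h B)).Finite := by
    rw [cfc_map_spectrum h B]
    exact hfin.image h
  calc y • Φ (cfc h B) ^ 2 + (2 * x ^ 2) • Φ B
      ≤ y • Φ (cfc h B ^ 2) + (2 * x ^ 2) • Φ B := by
        gcongr
        exact sq_map_le_map_sq_of_finite_spectrum Φ hΦ (cfc_predicate h B) hAfin
    _ = Φ (y • cfc h B ^ 2 + (2 * x ^ 2) • B) := by simp only [map_add, map_smul]
    _ ≤ Φ ((2 * x) • (cfc h B * B) + (x ^ 2 * y) • 1) :=
        OrderHomClass.mono Φ (smul_cfc_sq_add_smul_le hB hh hxy)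
    _ = (2 * x) • Φ (cfc h B * B) + (x ^ 2 * y) • Φ 1 := by simp only [map_add, map_smul]
    _ ≤ (2 * x) • Φ (cfc h B * B) + (x ^ 2 * y) • 1 := by gcongr

end FunctionalCalculus

open Matrix

section QuadraticForm

variable {𝕜 n : Type*} [RCLike 𝕜] [Fintype n] [DecidableEq n]

/-- The quadratic form `w ↦ Re ⟪X w, w⟫` of a matrix, the numerator of its Rayleigh quotient. -/
noncomputable def quadForm (X : Matrix n n 𝕜) (w : EuclideanSpace 𝕜 n) : ℝ :=
  (toEuclideanCLM (𝕜 := 𝕜) X).reApplyInnerSelf w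

lemma quadForm_eq_re_inner (X : Matrix n n 𝕜) (w : EuclideanSpace 𝕜 n) :
    quadForm X w = RCLike.re (inner 𝕜 (toEuclideanCLM (𝕜 := 𝕜) X w) w) := rfl

lemma quadForm_add (X Y : Matrix n n 𝕜) (w : EuclideanSpace 𝕜 n) :
    quadForm (X + Y) w = quadForm X w + quadForm Y w := by
  simp only [quadForm_eq_re_inner, map_add, _root_.add_apply, inner_add_left]

lemma quadForm_smul (r : ℝ) (X : Matrix n n 𝕜) (w : EuclideanSpace 𝕜 n) :
    quadForm (r • X) w = r * quadForm X w := by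
  rw [quadForm_eq_re_inner, RCLike.real_smul_eq_coe_smul (K := 𝕜), map_smul,
    _root_.smul_apply, inner_smul_left, RCLike.conj_ofReal, RCLike.re_ofReal_mul,
    ← quadForm_eq_re_inner]

lemma quadForm_one (w : EuclideanSpace 𝕜 n) : quadForm (1 : Matrix n n 𝕜) w = ‖w‖ ^ 2 := by
  rw [quadForm_eq_re_inner, map_one, one_apply_eq_self, inner_self_eq_norm_sq]

lemma quadForm_conjTranspose_mul_mul (Z Y : Matrix n n 𝕜) (w : EuclideanSpace 𝕜 n) :
    quadForm (Yᴴ * Z * Y) w = quadForm Z (toEuclideanCLM (𝕜 := 𝕜) Y w) := by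
  simp only [quadForm_eq_re_inner, ← star_eq_conjTranspose, map_mul, map_star,
    ContinuousLinearMap.star_eq_adjoint, mul_apply_eq_comp,
    ContinuousLinearMap.adjoint_inner_left]

lemma quadForm_conjTranspose_mul_self (Y : Matrix n n 𝕜) (w : EuclideanSpace 𝕜 n) :
    quadForm (Yᴴ * Y) w = ‖toEuclideanCLM (𝕜 := 𝕜) Y w‖ ^ 2 := by
  rw [← quadForm_one, ← quadForm_conjTranspose_mul_mul, mul_one]

open scoped MatrixOrder in
lemma quadForm_mono {X Y : Matrix n n 𝕜} (hXY : X ≤ Y) (w : EuclideanSpace 𝕜 n) :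
    quadForm X w ≤ quadForm Y w := by
  have hsub : 0 ≤ quadForm (Y - X) w := (isPositive_toEuclideanLin_iff.2 (le_iff.1 hXY)).2 w
  calc quadForm X w ≤ quadForm (Y - X) w + quadForm X w := le_add_of_nonneg_left hsub
    _ = quadForm Y w := by rw [← quadForm_add, sub_add_cancel]

end QuadraticForm

section Eigenvalues

variable {d : ℕ} {X : Matrix (Fin d) (Fin d) ℂ}

lemma eigDesc_antitone (X : Matrix (Fin d) (Fin d) ℂ) : Antitone (eigDesc X) := by
  unfold eigDesc
  split_ifs with hX
  · exact fun i j hij => Tuple.monotone_sort _ (Fin.rev_le_rev.2 hij)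
  · exact antitone_const

lemma eigDesc_nonneg (hX : X.PosSemidef) (j : Fin d) : 0 ≤ eigDesc X j := by
  rw [eigDesc, dif_pos hX.isHermitian]
  exact hX.eigenvalues_nonneg _

lemma exists_orthonormalBasis_apply_eq_eigDesc_smul (hX : X.IsHermitian) :
    ∃ u : OrthonormalBasis (Fin d) ℂ (EuclideanSpace ℂ (Fin d)),
      ∀ j, toEuclideanCLM (𝕜 := ℂ) X (u j) = (eigDesc X j : ℂ) • u j := by
  refine ⟨hX.eigenvectorBasis.reindex (Fin.revPerm.trans (Tuple.sort hX.eigenvalues)).symm,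
    fun j => WithLp.ofLp_injective 2 ?_⟩
  simpa [eigDesc, hX] using hX.mulVec_eigenvectorBasis (Tuple.sort hX.eigenvalues j.rev)

lemma exists_orthonormalBasis_quadForm_eq_sum (hX : X.IsHermitian) :
    ∃ u : OrthonormalBasis (Fin d) ℂ (EuclideanSpace ℂ (Fin d)),
      ∀ w, quadForm X w = ∑ j, eigDesc X j * ‖inner ℂ (u j) w‖ ^ 2 := by
  obtain ⟨u, hu⟩ := exists_orthonormalBasis_apply_eq_eigDesc_smul hX
  refine ⟨u, fun w => ?_⟩
  have hXw : toEuclideanCLM (𝕜 := ℂ) X w = ∑ j, inner ℂ (u j) w • (eigDesc X j : ℂ) • u j := by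
    conv_lhs => rw [← u.sum_repr' w]
    simp only [map_sum, map_smul, hu]
  rw [quadForm_eq_re_inner, hXw, sum_inner, map_sum]
  refine Finset.sum_congr rfl fun j _ => ?_
  rw [inner_smul_left, inner_smul_left, Complex.conj_ofReal, mul_left_comm, Complex.conj_mul',
    ← Complex.ofReal_pow, ← Complex.ofReal_mul]
  exact Complex.ofReal_re _

-- Courant-Fischer: a subspace of codimension at most `j` is encoded as the kernel of `F`.
lemma exists_linearMap_quadForm_le (hX : X.IsHermitian) {j : Fin d} {c : ℝ}
    (hj : eigDesc X j ≤ c) : ∃ F : EuclideanSpace ℂ (Fin d) →ₗ[ℂ] (Fin j → ℂ),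
      ∀ w, F w = 0 → quadForm X w ≤ c * ‖w‖ ^ 2 := by
  obtain ⟨u, hu⟩ := exists_orthonormalBasis_quadForm_eq_sum hX
  refine ⟨.pi fun i => innerₛₗ ℂ (u (i.castLE j.is_lt.le)), fun w hw => ?_⟩
  rw [hu, ← u.sum_sq_norm_inner_right w, Finset.mul_sum]
  refine Finset.sum_le_sum fun i _ => ?_
  rcases lt_or_ge i j with hij | hji
  · have hwi : inner ℂ (u i) w = 0 := congrFun hw ⟨i, hij⟩
    simp [hwi]
  · gcongr
    exact (eigDesc_antitone X hji).trans hj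

lemma eigDesc_le_of_quadForm_le (hX : X.IsHermitian) {j : Fin d} {c : ℝ}
    (F : EuclideanSpace ℂ (Fin d) →ₗ[ℂ] (Fin j → ℂ))
    (hF : ∀ w, F w = 0 → quadForm X w ≤ c * ‖w‖ ^ 2) : eigDesc X j ≤ c := by
  obtain ⟨u, hu⟩ := exists_orthonormalBasis_quadForm_eq_sum hX
  let tail : EuclideanSpace ℂ (Fin d) →ₗ[ℂ] (Finset.Ioi j → ℂ) :=
    .pi fun i => innerₛₗ ℂ (u i)
  have hdim : Module.finrank ℂ ((Fin j → ℂ) × (Finset.Ioi j → ℂ)) <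
      Module.finrank ℂ (EuclideanSpace ℂ (Fin d)) := by
    rw [Module.finrank_prod, Module.finrank_fintype_fun_eq_card,
      Module.finrank_fintype_fun_eq_card, finrank_euclideanSpace_fin, Fintype.card_fin,
      Fintype.card_coe, Fin.card_Ioi]
    omega
  obtain ⟨w, hw, hw0⟩ := (Submodule.ne_bot_iff _).1
    (LinearMap.ker_ne_bot_of_finrank_lt (f := F.prod tail) hdim)
  obtain ⟨hFw, htail⟩ : F w = 0 ∧ tail w = 0 := Prod.ext_iff.1 hw
  have hlow : eigDesc X j * ‖w‖ ^ 2 ≤ quadForm X w := by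
    rw [hu, ← u.sum_sq_norm_inner_right w, Finset.mul_sum]
    refine Finset.sum_le_sum fun i _ => ?_
    rcases le_or_gt i j with hij | hji
    · gcongr
      exact eigDesc_antitone X hij
    · have hwi : inner ℂ (u i) w = 0 := congrFun htail ⟨i, Finset.mem_Ioi.2 hji⟩
      simp [hwi]
  exact le_of_mul_le_mul_right (hlow.trans (hF w hFw)) (by positivity)

end Eigenvalues

section AbsoluteValue

open scoped MatrixOrder

variable {d : ℕ}

lemma matAbs_eq_cfcAbs (X : Matrix (Fin d) (Fin d) ℂ) : matAbs X = CFC.abs X := by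
  rw [CFC.abs, CFC.sqrt_eq_real_sqrt _ (star_mul_self_nonneg X), cfcₙ_eq_cfc, matAbs,
    star_eq_conjTranspose]

lemma posSemidef_matAbs (X : Matrix (Fin d) (Fin d) ℂ) : (matAbs X).PosSemidef := by
  rw [← nonneg_iff_posSemidef, matAbs_eq_cfcAbs]
  exact CFC.abs_nonneg X

lemma norm_toEuclideanCLM_matAbs (X : Matrix (Fin d) (Fin d) ℂ) (w : EuclideanSpace ℂ (Fin d)) :
    ‖toEuclideanCLM (𝕜 := ℂ) (matAbs X) w‖ = ‖toEuclideanCLM (𝕜 := ℂ) X w‖ := by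
  have hsq : (matAbs X)ᴴ * matAbs X = Xᴴ * X := by
    rw [(posSemidef_matAbs X).isHermitian.eq, matAbs_eq_cfcAbs, CFC.abs_mul_abs,
      star_eq_conjTranspose]
  rw [← sq_eq_sq₀ (norm_nonneg _) (norm_nonneg _), ← quadForm_conjTranspose_mul_self, hsq,
    quadForm_conjTranspose_mul_self]

lemma quadForm_matAbs_le (X : Matrix (Fin d) (Fin d) ℂ) (w : EuclideanSpace ℂ (Fin d)) :
    quadForm (matAbs X) w ≤ ‖toEuclideanCLM (𝕜 := ℂ) X w‖ * ‖w‖ := by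
  rw [quadForm_eq_re_inner, ← norm_toEuclideanCLM_matAbs]
  exact re_inner_le_norm _ _

variable {X Y Z : Matrix (Fin d) (Fin d) ℂ} {x y z : ℝ}

lemma norm_toEuclideanCLM_mul_le (hX : X.IsHermitian) (hY : 0 ≤ Y) (hx : 0 ≤ x) (hy : 0 < y)
    (hz : 0 ≤ z) (hxy : x = 0 ∨ x * y = z)
    (hle : y • X ^ 2 + (2 * x ^ 2) • Y ≤ (2 * x) • Z + (x ^ 2 * y) • 1)
    {w : EuclideanSpace ℂ (Fin d)}
    (hw : quadForm Z (toEuclideanCLM (𝕜 := ℂ) Y w) ≤ z * ‖toEuclideanCLM (𝕜 := ℂ) Y w‖ ^ 2) :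
    ‖toEuclideanCLM (𝕜 := ℂ) (X * Y) w‖ ≤ z * ‖w‖ := by
  have hYh : Yᴴ = Y := hY.posSemidef.isHermitian
  have hform : y * ‖toEuclideanCLM (𝕜 := ℂ) (X * Y) w‖ ^ 2
        + 2 * x ^ 2 * y * ‖toEuclideanCLM (𝕜 := ℂ) Y w‖ ^ 2 ≤
      2 * x * quadForm Z (toEuclideanCLM (𝕜 := ℂ) Y w) + x ^ 2 * y ^ 3 * ‖w‖ ^ 2 := by
    have hXY : Y * X ^ 2 * Y = (X * Y)ᴴ * (X * Y) := by
      rw [conjTranspose_mul, hYh, hX.eq, sq]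
      simp only [mul_assoc]
    have hYY : Y ^ 2 = Yᴴ * Y := by rw [hYh, sq]
    have hYZY : Y * Z * Y = Yᴴ * Z * Y := by rw [hYh]
    have hmono := quadForm_mono (smul_conjugate_sq_add_le hY hy.le hle) w
    rwa [quadForm_add, quadForm_add, quadForm_smul, quadForm_smul, quadForm_smul, quadForm_smul,
      quadForm_one, hXY, hYY, hYZY, quadForm_conjTranspose_mul_self,
      quadForm_conjTranspose_mul_self, quadForm_conjTranspose_mul_mul] at hmono
  refine (sq_le_sq₀ (norm_nonneg _) (by positivity)).1 (le_of_mul_le_mul_left ?_ hy)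
  rcases hxy with rfl | rfl
  · calc y * ‖toEuclideanCLM (𝕜 := ℂ) (X * Y) w‖ ^ 2 ≤ 0 := by linarith
      _ ≤ y * (z * ‖w‖) ^ 2 := by positivity
  · linarith [mul_le_mul_of_nonneg_left hw (mul_nonneg zero_le_two hx)]

lemma eigDesc_matAbs_mul_le (hX : X.IsHermitian) (hY : 0 ≤ Y) (hZ : Z.IsHermitian) (hx : 0 ≤ x)
    (hy : 0 < y) (hz : 0 ≤ z) (hxy : x = 0 ∨ x * y = z)
    (hle : y • X ^ 2 + (2 * x ^ 2) • Y ≤ (2 * x) • Z + (x ^ 2 * y) • 1) {j : Fin d}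
    (hj : eigDesc Z j ≤ z) : eigDesc (matAbs (X * Y)) j ≤ z := by
  obtain ⟨F, hF⟩ := exists_linearMap_quadForm_le hZ hj
  refine eigDesc_le_of_quadForm_le (posSemidef_matAbs _).isHermitian
    (F ∘ₗ (toEuclideanCLM (𝕜 := ℂ) Y).toLinearMap) fun w hw => ?_
  calc quadForm (matAbs (X * Y)) w ≤ ‖toEuclideanCLM (𝕜 := ℂ) (X * Y) w‖ * ‖w‖ :=
        quadForm_matAbs_le (X * Y) w
    _ ≤ z * ‖w‖ * ‖w‖ := by
        gcongr
        exact norm_toEuclideanCLM_mul_le hX hY hx hy hz hxy hle (hF _ hw)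
    _ = z * ‖w‖ ^ 2 := by ring

end AbsoluteValue

open scoped MatrixOrder in
theorem concave_pair_weak_log_majorization_general {n d : ℕ} {A B : Matrix (Fin n) (Fin n) ℂ}
    (hAB : ConcaveMonotonePair A B)
    (Φ : Matrix (Fin n) (Fin n) ℂ →ₗ[ℝ] Matrix (Fin d) (Fin d) ℂ) (hΦ1 : loewnerLE (Φ 1) 1)
    (hΦpos : ∀ X : Matrix (Fin n) (Fin n) ℂ, X.PosSemidef → (Φ X).PosSemidef) (j : Fin d) :
    eigDesc (matAbs (Φ A * Φ B)) j ≤ eigDesc (Φ (A * B)) j := by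
  obtain ⟨h, hB, hm, hc, h0, rfl⟩ := hAB
  let Ψ : Matrix (Fin n) (Fin n) ℂ →ₚ[ℝ] Matrix (Fin d) (Fin d) ℂ :=
    .mk₀ Φ fun X hX => (hΦpos X hX.posSemidef).nonneg
  have hfin : (spectrum ℝ B).Finite := finite_real_spectrum
  have hA : 0 ≤ cfc h B := cfc_nonneg fun b hb => h0 b (spectrum_nonneg_of_nonneg hB.nonneg hb)
  have hAB : 0 ≤ cfc h B * B := cfc_mul_self_nonneg hB.nonneg (hfin.continuousOn h) h0
  have hZ : (Φ (cfc h B * B)).PosSemidef := hΦpos _ hAB.posSemidef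
  refine le_of_forall_gt_imp_ge_of_dense fun z hz => ?_
  have hz0 : 0 < z := (eigDesc_nonneg hZ j).trans_lt hz
  obtain ⟨x, y, hx, hy, hxyz, hxy⟩ :=
    exists_mul_sq_add_sq_mul_le_of_concaveOn hm hc (h0 0 Set.self_mem_Ici) hz0
  exact eigDesc_matAbs_mul_le (hΦpos _ hA.posSemidef).isHermitian (hΦpos B hB).nonneg
    hZ.isHermitian hx hy hz0.le hxyz
    (smul_sq_map_cfc_add_smul_map_le Ψ hΦ1 hB.nonneg hfin hy.le hxy) hz.le

/-- For a concave monotone pair `(A, B)` and a unital positive linear map `Φ`, the matrix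
`|Φ(A) Φ(B)|` is weakly log-majorized by `Φ(AB)`. -/
theorem concave_pair_weak_log_majorization {n d : ℕ} (A B : Matrix (Fin n) (Fin n) ℂ)
    (hAB : ConcaveMonotonePair A B)
    (Φ : Matrix (Fin n) (Fin n) ℂ →ₗ[ℂ] Matrix (Fin d) (Fin d) ℂ)
    (hΦ1 : Φ 1 = 1) (hΦpos : ∀ X : Matrix (Fin n) (Fin n) ℂ, X.PosSemidef → (Φ X).PosSemidef)
    (k : ℕ) :
    ∏ j ∈ Finset.univ.filter (fun j : Fin d => (j : ℕ) < k), eigDesc (matAbs (Φ A * Φ B)) j ≤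
      ∏ j ∈ Finset.univ.filter (fun j : Fin d => (j : ℕ) < k), eigDesc (Φ (A * B)) j := by
  have hΦ1' : loewnerLE (Φ.restrictScalars ℝ 1) 1 := by simp [loewnerLE, hΦ1, PosSemidef.zero]
  exact Finset.prod_le_prod (fun j _ => eigDesc_nonneg (posSemidef_matAbs _) j) fun j _ =>
    concave_pair_weak_log_majorization_general hAB (Φ.restrictScalars ℝ) hΦ1' hΦpos j
end

section
/- Let A, B be positive definite matrices with A ≥ B, and let p, r > 0. Then A^{-r} ♯_{r/(p+r)} B^p ≤ I, where ♯_α is the α-weighted geometric mean. -/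
open scoped Matrix ComplexOrder

/-- The α-weighted matrix geometric mean `A ♯_α B = A^{1/2} (A^{-1/2} B A^{-1/2})^α A^{1/2}`. -/
noncomputable def geomMean {n : ℕ} (α : ℝ) (A B : Matrix (Fin n) (Fin n) ℂ) :
    Matrix (Fin n) (Fin n) ℂ :=
  mpow A (1 / 2) * mpow (mpow A (-(1 / 2)) * B * mpow A (-(1 / 2))) α * mpow A (1 / 2)

/-!
Write `a ♯_α b` for the weighted geometric mean. Congruence by an invertible element preserves it,
and congruence by `a^{-1/2}` yields the symmetry `b ♯_{1-α} a = a ♯_α b`. By the Löwner–Heinz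
inequality the mean is therefore monotone in both arguments when `0 ≤ α ≤ 1`. For `0 ≤ s ≤ 1` and
`b ≤ a` also `a^{-s} ≤ b^{-s}`, so `a^{-s} ♯_α b^p ≤ b^{-s} ♯_α b^p`, which is a power of `b`.

With `s = r` and `α = r/(p+r)` this power is `b^0 = 1`, which settles `r ≤ 1`. To pass from `r` to
`2r`, put `x = a^{r/2} b^p a^{r/2}`. By congruence the case `r` says that `x^{r/(p+r)} ≤ a^r`, and
the bound for `s = 1` and this pair, with the power of `x^{r/(p+r)}` that equals `x`, is the case
`2r`.
-/

lemma exists_unitary_eq_mul {M : Type*} [Monoid M] [StarMul M] {x y : M} (hx : IsUnit x)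
    (hy : IsUnit y) (h : x * star x = y * star y) : ∃ u : unitary M, x = y * u := by
  obtain ⟨y, rfl⟩ := hy
  have hu : (↑y⁻¹ * x) * star (↑y⁻¹ * x) = 1 := by
    rw [star_mul, mul_assoc, ← mul_assoc x, h, mul_assoc, ← star_mul, Units.inv_mul, star_one,
      mul_one, Units.inv_mul]
  exact ⟨⟨↑y⁻¹ * x, (y⁻¹.isUnit.mul hx).mem_unitary_of_mul_star_self hu⟩,
    (y.mul_inv_cancel_left x).symm⟩

section CStarAlgebra

variable {R : Type*} [CStarAlgebra R] [PartialOrder R] [StarOrderedRing R] {a b c : R} {α s : ℝ}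

lemma rpow_rpow_of_isStrictlyPositive (ha : IsStrictlyPositive a) (x y : ℝ) :
    (a ^ x) ^ y = a ^ (x * y) := by
  rcases eq_or_ne x 0 with rfl | hx
  · rw [CFC.rpow_zero a, CFC.one_rpow, zero_mul, CFC.rpow_zero a]
  · exact CFC.rpow_rpow a x y hx

lemma rpow_half_mul_rpow_half (ha : 0 ≤ a) : a ^ (1 / 2 : ℝ) * a ^ (1 / 2 : ℝ) = a := by
  rw [← CFC.sqrt_eq_rpow, CFC.sqrt_mul_sqrt_self a]

lemma rpow_mul_rpow_mul_rpow (ha : IsStrictlyPositive a) (x y z : ℝ) :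
    a ^ x * a ^ y * a ^ z = a ^ (x + y + z) := by
  rw [CFC.rpow_add ha.isUnit, CFC.rpow_add ha.isUnit]

lemma rpow_mul_conj_mul_rpow (ha : IsStrictlyPositive a) (x y : ℝ) (b : R) :
    a ^ x * (a ^ y * b * a ^ y) * a ^ x = a ^ (x + y) * b * a ^ (x + y) := by
  nth_rw 2 [add_comm x y]
  rw [CFC.rpow_add ha.isUnit, CFC.rpow_add ha.isUnit]
  simp only [mul_assoc]

lemma rpow_neg_le_rpow_neg (ha : IsStrictlyPositive a) (hab : a ≤ b) (hs : s ∈ Set.Icc 0 1) :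
    b ^ (-s) ≤ a ^ (-s) := by
  have hb := ha.of_le hab
  have h := CFC.rpow_le_rpow hs (CStarAlgebra.ringInverse_le_ringInverse hab)
  rwa [CFC.inverse_eq_rpow_neg_one, CFC.inverse_eq_rpow_neg_one,
    rpow_rpow_of_isStrictlyPositive ha, rpow_rpow_of_isStrictlyPositive hb, neg_one_mul] at h

lemma unitary_conj_rpow (u : unitary R) (ha : IsStrictlyPositive a) (x : ℝ) :
    (u * a * star (u : R)) ^ x = u * a ^ x * star (u : R) := by
  have ha_cont : ContinuousOn (fun y : ℝ => y ^ x) (spectrum ℝ a) := fun y hy =>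
    (Real.continuousAt_rpow_const y x (.inl (ha.spectrum_pos hy).ne')).continuousWithinAt
  have hu_cont : Continuous (Unitary.conjStarAlgAut ℝ R u) := by
    change Continuous fun y => (u : R) * y * star (u : R)
    fun_prop
  have hu_nonneg : 0 ≤ u * a * star (u : R) := star_right_conjugate_nonneg ha.nonneg _
  rw [CFC.rpow_eq_cfc_real hu_nonneg, CFC.rpow_eq_cfc_real ha.nonneg]
  exact (StarAlgHomClass.map_cfc (S := ℝ) (Unitary.conjStarAlgAut ℝ R u) (· ^ x) a ha_cont hu_cont
    ha.isSelfAdjoint hu_nonneg.isSelfAdjoint).symm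

/-- The `α`-weighted geometric mean `a ♯_α b` of strictly positive elements of a C⋆-algebra, written
`a ♯[α] b`. For matrices it is `geomMean`, with the order of the arguments adapted to infix use. -/
noncomputable def weightedGeomMean (a : R) (α : ℝ) (b : R) : R :=
  a ^ (1 / 2 : ℝ) * (a ^ (-(1 / 2) : ℝ) * b * a ^ (-(1 / 2) : ℝ)) ^ α * a ^ (1 / 2 : ℝ)

local notation:70 a:71 "♯[" α "]" b:71 => weightedGeomMean a α b

lemma rpow_weightedGeomMean_rpow (ha : IsStrictlyPositive a) (x y α : ℝ) :
    a ^ x ♯[α] a ^ y = a ^ ((1 - α) * x + α * y) := by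
  simp only [weightedGeomMean, rpow_rpow_of_isStrictlyPositive ha, rpow_mul_rpow_mul_rpow ha]
  ring_nf

lemma one_weightedGeomMean (α : ℝ) (b : R) : 1 ♯[α] b = b ^ α := by
  simp only [weightedGeomMean, CFC.one_rpow, one_mul, mul_one]

lemma weightedGeomMean_one (ha : IsStrictlyPositive a) (α : ℝ) : a ♯[α] 1 = a ^ (1 - α) := by
  simpa only [CFC.rpow_one a, CFC.rpow_zero a, mul_one, mul_zero, add_zero]
    using rpow_weightedGeomMean_rpow ha 1 0 α

lemma exists_unitary_mul_rpow_half {t : R} (ht : IsUnit t) (ha : IsStrictlyPositive a) :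
    ∃ u : unitary R, t * a ^ (1 / 2 : ℝ) = (t * a * star t) ^ (1 / 2 : ℝ) * u := by
  have hd : IsStrictlyPositive (t * a * star t) :=
    ht.isStrictlyPositive_star_right_conjugate_iff.2 ha
  refine exists_unitary_eq_mul (ht.mul (ha.rpow a _).isUnit) (hd.rpow _ _).isUnit ?_
  calc t * a ^ (1 / 2 : ℝ) * star (t * a ^ (1 / 2 : ℝ))
      = t * (a ^ (1 / 2 : ℝ) * a ^ (1 / 2 : ℝ)) * star t := by
        rw [star_mul, (ha.rpow a _).isSelfAdjoint.star_eq]; simp only [mul_assoc]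
    _ = (t * a * star t) ^ (1 / 2 : ℝ) * star ((t * a * star t) ^ (1 / 2 : ℝ)) := by
        rw [(hd.rpow _ _).isSelfAdjoint.star_eq, rpow_half_mul_rpow_half ha.nonneg,
          rpow_half_mul_rpow_half hd.nonneg]

lemma conj_weightedGeomMean {t : R} (ht : IsUnit t) (ha : IsStrictlyPositive a)
    (hb : IsStrictlyPositive b) (α : ℝ) :
    t * (a ♯[α] b) * star t = (t * a * star t) ♯[α] (t * b * star t) := by
  set d := t * a * star t
  have hd : IsStrictlyPositive d := ht.isStrictlyPositive_star_right_conjugate_iff.2 ha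
  have star_rpow (e : R) (x : ℝ) : star (e ^ x) = e ^ x := CFC.rpow_nonneg.star_eq
  obtain ⟨u, hu⟩ := exists_unitary_mul_rpow_half ht ha
  have hu_star : a ^ (1 / 2 : ℝ) * star t = star (u : R) * d ^ (1 / 2 : ℝ) := by
    simpa only [star_mul, star_rpow] using congrArg star hu
  have hdt : d ^ (-(1 / 2) : ℝ) * t = u * a ^ (-(1 / 2) : ℝ) :=
    calc d ^ (-(1 / 2) : ℝ) * t
        = d ^ (-(1 / 2) : ℝ) * (t * a ^ (1 / 2 : ℝ)) * a ^ (-(1 / 2) : ℝ) := by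
          rw [mul_assoc, mul_assoc t, CFC.rpow_mul_rpow_neg, mul_one]
      _ = u * a ^ (-(1 / 2) : ℝ) := by
          rw [hu, ← mul_assoc, CFC.rpow_neg_mul_rpow, one_mul]
  have hdt_star : star t * d ^ (-(1 / 2) : ℝ) = a ^ (-(1 / 2) : ℝ) * star (u : R) := by
    simpa only [star_mul, star_rpow] using congrArg star hdt
  have hinner : IsStrictlyPositive (a ^ (-(1 / 2) : ℝ) * b * a ^ (-(1 / 2) : ℝ)) :=
    .conjugate_of_isUnit_of_isSelfAdjoint b _ (ha.rpow a _).isUnit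
  symm
  calc d ♯[α] (t * b * star t)
      = d ^ (1 / 2 : ℝ) * ((d ^ (-(1 / 2) : ℝ) * t) * b * (star t * d ^ (-(1 / 2) : ℝ))) ^ α *
          d ^ (1 / 2 : ℝ) := by
        simp only [weightedGeomMean, mul_assoc]
    _ = d ^ (1 / 2 : ℝ) * (u * (a ^ (-(1 / 2) : ℝ) * b * a ^ (-(1 / 2) : ℝ)) * star (u : R)) ^ α *
          d ^ (1 / 2 : ℝ) := by
        rw [hdt, hdt_star]; simp only [mul_assoc]
    _ = (d ^ (1 / 2 : ℝ) * u) * (a ^ (-(1 / 2) : ℝ) * b * a ^ (-(1 / 2) : ℝ)) ^ α *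
          (star (u : R) * d ^ (1 / 2 : ℝ)) := by
        rw [unitary_conj_rpow u hinner]; simp only [mul_assoc]
    _ = t * (a ♯[α] b) * star t := by
        rw [← hu, ← hu_star]; simp only [weightedGeomMean, mul_assoc]

lemma rpow_weightedGeomMean_le_one_iff (ha : IsStrictlyPositive a) (hb : IsStrictlyPositive b)
    (r s α : ℝ) :
    a ^ s ♯[α] b ≤ 1 ↔ a ^ (r + s) ♯[α] (a ^ (r / 2) * b * a ^ (r / 2)) ≤ a ^ r := by
  have hr := ha.rpow a (r / 2)
  have star_hr : star (a ^ (r / 2)) = a ^ (r / 2) := hr.isSelfAdjoint.star_eq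
  have hconj := conj_weightedGeomMean hr.isUnit (ha.rpow a s) hb α
  rw [star_hr, rpow_mul_rpow_mul_rpow ha, add_right_comm, add_halves] at hconj
  have hone : a ^ (r / 2) * 1 * a ^ (r / 2) = a ^ r := by
    rw [mul_one, ← CFC.rpow_add ha.isUnit, add_halves]
  have hiff := hr.isUnit.star_right_conjugate_nonneg_iff (x := 1 - a ^ s ♯[α] b)
  rwa [star_hr, mul_sub, sub_mul, hone, hconj, sub_nonneg, sub_nonneg, Iff.comm] at hiff

lemma weightedGeomMean_one_sub (ha : IsStrictlyPositive a) (hb : IsStrictlyPositive b) (α : ℝ) :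
    b ♯[1 - α] a = a ♯[α] b := by
  set y := a ^ (-(1 / 2) : ℝ) * b * a ^ (-(1 / 2) : ℝ) with hy_def
  have hy : IsStrictlyPositive y :=
    .conjugate_of_isUnit_of_isSelfAdjoint b _ (ha.rpow a _).isUnit
  have hb_eq : a ^ (1 / 2 : ℝ) * y * a ^ (1 / 2 : ℝ) = b := by
    rw [hy_def, rpow_mul_conj_mul_rpow ha, add_neg_cancel, CFC.rpow_zero a, one_mul, mul_one]
  have ha_eq : a ^ (1 / 2 : ℝ) * 1 * a ^ (1 / 2 : ℝ) = a := by
    rw [mul_one, rpow_half_mul_rpow_half ha.nonneg]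
  have h := conj_weightedGeomMean (ha.rpow a (1 / 2)).isUnit hy isStrictlyPositive_one (1 - α)
  rw [(ha.rpow a _).isSelfAdjoint.star_eq, hb_eq, ha_eq, weightedGeomMean_one hy,
    sub_sub_cancel] at h
  exact h.symm

lemma weightedGeomMean_le_weightedGeomMean_right (hα : α ∈ Set.Icc 0 1) (a : R) (hbc : b ≤ c) :
    a ♯[α] b ≤ a ♯[α] c :=
  conjugate_le_conjugate_of_nonneg
    (CFC.rpow_le_rpow hα (conjugate_le_conjugate_of_nonneg hbc CFC.rpow_nonneg)) CFC.rpow_nonneg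

lemma weightedGeomMean_le_weightedGeomMean_left (hα : α ∈ Set.Icc 0 1)
    (ha : IsStrictlyPositive a) (hab : a ≤ b) (hc : IsStrictlyPositive c) :
    a ♯[α] c ≤ b ♯[α] c := by
  rw [← weightedGeomMean_one_sub ha hc, ← weightedGeomMean_one_sub (ha.of_le hab) hc]
  exact weightedGeomMean_le_weightedGeomMean_right (Set.Icc.mem_iff_one_sub_mem.1 hα) c hab

lemma rpow_neg_weightedGeomMean_rpow_le (hb : IsStrictlyPositive b) (hba : b ≤ a)
    (hs : s ∈ Set.Icc 0 1) (hα : α ∈ Set.Icc 0 1) (p : ℝ) :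
    a ^ (-s) ♯[α] b ^ p ≤ b ^ ((1 - α) * -s + α * p) :=
  calc a ^ (-s) ♯[α] b ^ p
      ≤ b ^ (-s) ♯[α] b ^ p :=
        weightedGeomMean_le_weightedGeomMean_left hα ((hb.of_le hba).rpow a (-s))
          (rpow_neg_le_rpow_neg hb hba hs) (hb.rpow b p)
    _ = b ^ ((1 - α) * -s + α * p) := rpow_weightedGeomMean_rpow hb (-s) p α

lemma weightedGeomMean_rpow_neg_two_mul_le_one (hb : IsStrictlyPositive b) (hba : b ≤ a) {p r : ℝ}
    (hp : 0 ≤ p) (hr : 0 < r) (h : a ^ (-r) ♯[r / (p + r)] b ^ p ≤ 1) :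
    a ^ (-(2 * r)) ♯[2 * r / (p + 2 * r)] b ^ p ≤ 1 := by
  have ha := hb.of_le hba
  set x := a ^ (r / 2) * b ^ p * a ^ (r / 2)
  have hx : IsStrictlyPositive x :=
    .conjugate_of_isUnit_of_isSelfAdjoint _ _ (ha.rpow a _).isUnit
  have hxa : x ^ (r / (p + r)) ≤ a ^ r := by
    rwa [rpow_weightedGeomMean_le_one_iff ha (hb.rpow b p) r, add_neg_cancel, CFC.rpow_zero a,
      one_weightedGeomMean] at h
  have hβ : 2 * r / (p + 2 * r) ∈ Set.Icc (0 : ℝ) 1 :=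
    ⟨by positivity, by rw [div_le_one (by positivity)]; linarith⟩
  rw [rpow_weightedGeomMean_le_one_iff ha (hb.rpow b p) r]
  set β := 2 * r / (p + 2 * r) with hβ_def
  calc a ^ (r + -(2 * r)) ♯[β] x
      = (a ^ r) ^ (-1 : ℝ) ♯[β] (x ^ (r / (p + r))) ^ ((p + r) / r) := by
        rw [rpow_rpow_of_isStrictlyPositive ha, rpow_rpow_of_isStrictlyPositive hx,
          div_mul_div_cancel₀ (by positivity), div_self hr.ne', CFC.rpow_one x]
        ring_nf
    _ ≤ (x ^ (r / (p + r))) ^ ((1 - β) * -1 + β * ((p + r) / r)) :=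
        rpow_neg_weightedGeomMean_rpow_le (hx.rpow x _) hxa ⟨zero_le_one, le_rfl⟩ hβ _
    _ = x ^ (r / (p + r)) := by
        rw [show (1 - β) * -1 + β * ((p + r) / r) = 1 by rw [hβ_def]; field_simp; ring,
          CFC.rpow_one _ CFC.rpow_nonneg]
    _ ≤ a ^ r := hxa

theorem fujii_kamei_first_general (hb : IsStrictlyPositive b) (hba : b ≤ a) {p r : ℝ}
    (hp : 0 ≤ p) (hr : 0 < r) : a ^ (-r) ♯[r / (p + r)] b ^ p ≤ 1 := by
  obtain ⟨k, hk⟩ := pow_unbounded_of_one_lt r one_lt_two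
  induction k generalizing r with
  | zero =>
    have hα : r / (p + r) ∈ Set.Icc (0 : ℝ) 1 :=
      ⟨by positivity, by rw [div_le_one (by positivity)]; linarith⟩
    have h := rpow_neg_weightedGeomMean_rpow_le hb hba ⟨hr.le, by simpa using hk.le⟩ hα p
    rwa [show (1 - r / (p + r)) * -r + r / (p + r) * p = 0 by field_simp; ring,
      CFC.rpow_zero b] at h
  | succ k ih =>
    have h := ih (half_pos hr) (by rw [pow_succ] at hk; linarith)
    simpa only [mul_div_cancel₀ r two_ne_zero] using
      weightedGeomMean_rpow_neg_two_mul_le_one hb hba hp (half_pos hr) h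

end CStarAlgebra

section Matrix

open scoped MatrixOrder Matrix.Norms.L2Operator

variable {n : ℕ} {A B : Matrix (Fin n) (Fin n) ℂ}

lemma mpow_eq_rpow (hA : 0 ≤ A) (x : ℝ) : mpow A x = A ^ x :=
  (CFC.rpow_eq_cfc_real hA).symm

lemma geomMean_eq_weightedGeomMean (hA : 0 ≤ A) (hB : 0 ≤ B) (α : ℝ) :
    geomMean α A B = weightedGeomMean A α B := by
  rw [geomMean, weightedGeomMean, mpow_eq_rpow hA, mpow_eq_rpow hA,
    mpow_eq_rpow (conjugate_nonneg_of_nonneg hB CFC.rpow_nonneg)]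

end Matrix

/-- If `A ≥ B > 0` and `p, r > 0`, then `A^{-r} ♯_{r/(p+r)} B^p ≤ I`. -/
theorem fujii_kamei_first {n : ℕ} (A B : Matrix (Fin n) (Fin n) ℂ)
    (hA : A.PosDef) (hB : B.PosDef) (hBA : loewnerLE B A) (p r : ℝ) (hp : 0 < p) (hr : 0 < r) :
    loewnerLE (geomMean (r / (p + r)) (mpow A (-r)) (mpow B p)) 1 := by
  open scoped MatrixOrder Matrix.Norms.L2Operator in
  rw [mpow_eq_rpow hA.posSemidef.nonneg, mpow_eq_rpow hB.posSemidef.nonneg,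
    geomMean_eq_weightedGeomMean CFC.rpow_nonneg CFC.rpow_nonneg]
  open scoped MatrixOrder Matrix.Norms.L2Operator in
  exact Matrix.le_iff.1 <|
    fujii_kamei_first_general hB.isStrictlyPositive (Matrix.le_iff.2 hBA) hp.le hr
end
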